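/- arXiv:2603.10333 — 8 statements merged into one kernel-verified Lean document; each statement's English description precedes it below -/
import Mathlib

section
/- Let Ω ⊆ ℝⁿ be open, let f^L, f^R : ℝⁿ → ℝⁿ be C¹, and let H : ℝⁿ → ℝ be C² with ∇H(x*) ≠ 0, where x* ∈ Σ = {x ∈ Ω : H(x) = 0}. Suppose x* lies in an attracting sliding region, i.e. 𝓛_{f^L}H(x*) > 0 and 𝓛_{f^R}H(x*) < 0. Suppose further that the following sliding-stability hypothesis holds: for every neighbourhood N₁ ⊆ Ω of x* there exists a neighbourhood N₂ ⊆ N₁ of x* such that every Filippov solution φ with φ(0) ∈ N₂ ∩ Σ satisfies φ(t) ∈ N₁ for all t ≥ 0 and φ(t) → x* as t → ∞. Then x* is an asymptotically stable equilibrium of the Filippov system: it is Lyapunov stable (for every neighbourhood N₁ ⊆ Ω of x* there is a neighbourhood N₂ ⊆ N₁ of x* such that every Filippov solution φ with φ(0) ∈ N₂ satisfies φ(t) ∈ N₁ for all t ≥ 0), and there is a neighbourhood N₃ of x* such that every Filippov solution φ with φ(0) ∈ N₃ satisfies φ(t) → x* as t → ∞. -/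
open MeasureTheory Filter Topology

/-- The Lie derivative `𝓛_f h (x) = Dh(x)[f(x)]`. -/
noncomputable def lieD {n : ℕ} (f : EuclideanSpace ℝ (Fin n) → EuclideanSpace ℝ (Fin n))
    (h : EuclideanSpace ℝ (Fin n) → ℝ) (x : EuclideanSpace ℝ (Fin n)) : ℝ :=
  fderiv ℝ h x (f x)

/-- The Filippov set-valued function `𝓕(x)`. -/
def FilippovSet {n : ℕ} (fL fR : EuclideanSpace ℝ (Fin n) → EuclideanSpace ℝ (Fin n))
    (H : EuclideanSpace ℝ (Fin n) → ℝ) (x : EuclideanSpace ℝ (Fin n)) :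
    Set (EuclideanSpace ℝ (Fin n)) :=
  {p | (H x < 0 ∧ p = fL x) ∨ (H x > 0 ∧ p = fR x) ∨
    (H x = 0 ∧ ∃ s ∈ Set.Icc (0:ℝ) 1, p = (1 - s) • fL x + s • fR x)}

/-- A Filippov solution: a locally absolutely continuous curve in `Ω` whose a.e. derivative
lies in the Filippov set. -/
def IsFilippovSol {n : ℕ} (fL fR : EuclideanSpace ℝ (Fin n) → EuclideanSpace ℝ (Fin n))
    (H : EuclideanSpace ℝ (Fin n) → ℝ) (Ω : Set (EuclideanSpace ℝ (Fin n)))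
    (φ : ℝ → EuclideanSpace ℝ (Fin n)) : Prop :=
  (∀ t : ℝ, 0 ≤ t → φ t ∈ Ω) ∧
  ∃ v : ℝ → EuclideanSpace ℝ (Fin n), LocallyIntegrable v ∧
    (∀ t : ℝ, φ t = φ 0 + ∫ s in (0:ℝ)..t, v s) ∧
    (∀ᵐ t ∂(volume.restrict (Set.Ici (0:ℝ))), v t ∈ FilippovSet fL fR H (φ t))

lemma fil_ii {E : Type*} [NormedAddCommGroup E]
    {v : ℝ → E} (hv : LocallyIntegrable v) {a b : ℝ} : IntervalIntegrable v volume a b :=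
  (hv.integrableOn_isCompact isCompact_uIcc).intervalIntegrable

/-- A curve with speed bounded by `M` inside a ball does not leave it in a short time. -/
lemma fil_confine {E : Type*} [NormedAddCommGroup E] [NormedSpace ℝ E]
    (φ v : ℝ → E) (xs : E) (δ ε M τ : ℝ) (hM : 0 ≤ M)
    (hφc : Continuous φ)
    (hφ : ∀ t : ℝ, φ t = φ 0 + ∫ s in (0:ℝ)..t, v s)
    (hv : ∀ᵐ t, 0 ≤ t → φ t ∈ Metric.ball xs δ → ‖v t‖ ≤ M)
    (h0 : φ 0 ∈ Metric.ball xs ε) (hδ : ε + M * τ ≤ δ) :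
    ∀ t ∈ Set.Icc 0 τ, φ t ∈ Metric.ball xs δ := by
  by_contra! hcon
  obtain ⟨t1, ht1, ht1'⟩ := hcon
  have hcpt : IsCompact (Set.Icc 0 τ ∩ φ ⁻¹' (Metric.ball xs δ)ᶜ) :=
    isCompact_Icc.inter_right ((Metric.isOpen_ball.isClosed_compl).preimage hφc)
  obtain ⟨t0, ⟨ht0, ht0'⟩, hmin⟩ := hcpt.exists_isLeast ⟨t1, ht1, ht1'⟩
  have hb : ‖∫ s in (0:ℝ)..t0, v s‖ ≤ M * |t0 - 0| := by
    apply intervalIntegral.norm_integral_le_of_norm_le_const_ae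
    have hne : ∀ᵐ t : ℝ, t ≠ t0 := by simp [ae_iff]
    filter_upwards [hv, hne] with t ht htne hmem
    rw [Set.uIoc_of_le ht0.1] at hmem
    apply ht hmem.1.le
    by_contra hnot
    have : t0 ≤ t := hmin ⟨⟨hmem.1.le, hmem.2.trans ht0.2⟩, hnot⟩
    exact htne (le_antisymm hmem.2 this)
  rw [sub_zero, abs_of_nonneg ht0.1] at hb
  apply ht0'
  rw [Metric.mem_ball, dist_eq_norm] at h0 ⊢
  have e : φ t0 - xs = (φ 0 - xs) + ∫ s in (0:ℝ)..t0, v s := by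
    rw [hφ t0]; abel
  rw [e]
  have h1 := norm_add_le (φ 0 - xs) (∫ s in (0:ℝ)..t0, v s)
  have h2 : M * t0 ≤ M * τ := mul_le_mul_of_nonneg_left ht0.2 hM
  linarith

/-- A curve following `g` where `K > 0`, with `K` decreasing along `g` at rate `c`, hits
`K = 0`. -/
lemma fil_hit {E : Type*} [NormedAddCommGroup E] [NormedSpace ℝ E] [CompleteSpace E]
    (φ v : ℝ → E) (K : E → ℝ) (g : E → E) (U : Set E) (c τ : ℝ) (hτ : 0 ≤ τ)
    (hφc : Continuous φ) (hg : Continuous g) (hK : Differentiable ℝ K)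
    (hφ : ∀ t : ℝ, φ t = φ 0 + ∫ s in (0:ℝ)..t, v s)
    (hv : ∀ᵐ t, 0 ≤ t → 0 < K (φ t) → v t = g (φ t))
    (hU : ∀ t ∈ Set.Icc 0 τ, φ t ∈ U)
    (hc : ∀ x ∈ U, fderiv ℝ K x (g x) ≤ -c)
    (h0 : 0 ≤ K (φ 0)) (h0' : K (φ 0) < c * τ) :
    ∃ T ∈ Set.Icc 0 τ, K (φ T) = 0 := by
  have hKc : Continuous (fun t => K (φ t)) := hK.continuous.comp hφc
  by_cases hpos : ∀ t ∈ Set.Icc 0 τ, 0 < K (φ t)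
  · exfalso
    have hφ' : ∀ t ∈ Set.Icc 0 τ, φ t = φ 0 + ∫ s in (0:ℝ)..t, g (φ s) := by
      intro t ht
      rw [hφ t]
      congr 1
      apply intervalIntegral.integral_congr_ae
      filter_upwards [hv] with s hs hmem
      rw [Set.uIoc_of_le ht.1] at hmem
      exact hs hmem.1.le (hpos s ⟨hmem.1.le, hmem.2.trans ht.2⟩)
    have hder : ∀ t ∈ Set.Ioo 0 τ, HasDerivAt φ (g (φ t)) t := by
      intro t ht
      have h1 : HasDerivAt (fun t => φ 0 + ∫ s in (0:ℝ)..t, g (φ s)) (g (φ t)) t :=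
        ((hg.comp hφc).integral_hasStrictDerivAt 0 t).hasDerivAt.const_add _
      apply h1.congr_of_eventuallyEq
      filter_upwards [Ioo_mem_nhds ht.1 ht.2] with s hs
      exact hφ' s ⟨hs.1.le, hs.2.le⟩
    have hder2 : ∀ t ∈ Set.Ioo 0 τ,
        HasDerivAt (fun t => K (φ t) + c * t) (fderiv ℝ K (φ t) (g (φ t)) + c * 1) t := by
      intro t ht
      exact ((hK (φ t)).hasFDerivAt.comp_hasDerivAt t (hder t ht)).add
        ((hasDerivAt_id t).const_mul c)
    have hanti : AntitoneOn (fun t => K (φ t) + c * t) (Set.Icc 0 τ) := by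
      apply antitoneOn_of_deriv_nonpos (convex_Icc 0 τ)
      · exact (hKc.add (continuous_const.mul continuous_id)).continuousOn
      · intro t ht
        rw [interior_Icc] at ht
        exact (hder2 t ht).differentiableAt.differentiableWithinAt
      · intro t ht
        rw [interior_Icc] at ht
        rw [(hder2 t ht).deriv]
        have := hc _ (hU t ⟨ht.1.le, ht.2.le⟩)
        linarith
    have h1 := hanti (Set.left_mem_Icc.2 hτ) (Set.right_mem_Icc.2 hτ) hτ
    have h2 := hpos τ (Set.right_mem_Icc.2 hτ)
    simp only [mul_zero, add_zero] at h1
    linarith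
  · push Not at hpos
    obtain ⟨t, ht, htK⟩ := hpos
    obtain ⟨T, hT, hTK⟩ := intermediate_value_Icc' ht.1 hKc.continuousOn ⟨htK, h0⟩
    exact ⟨T, ⟨hT.1, hT.2.trans ht.2⟩, hTK⟩

lemma fil_continuous {E : Type*} [NormedAddCommGroup E] [NormedSpace ℝ E]
    (φ v : ℝ → E) (hv : LocallyIntegrable v)
    (hφ : ∀ t : ℝ, φ t = φ 0 + ∫ s in (0:ℝ)..t, v s) : Continuous φ := by
  have : φ = fun t => φ 0 + ∫ s in (0:ℝ)..t, v s := funext hφ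
  rw [this]
  exact continuous_const.add
    (intervalIntegral.continuous_primitive (fun a b => (fil_ii hv)) 0)

lemma fil_shift {n : ℕ} (fL fR : EuclideanSpace ℝ (Fin n) → EuclideanSpace ℝ (Fin n))
    (H : EuclideanSpace ℝ (Fin n) → ℝ) (Ω : Set (EuclideanSpace ℝ (Fin n)))
    (φ : ℝ → EuclideanSpace ℝ (Fin n)) (h : IsFilippovSol fL fR H Ω φ) (T : ℝ) (hT : 0 ≤ T) :
    IsFilippovSol fL fR H Ω (fun t => φ (t + T)) := by
  obtain ⟨h1, v, hv, hφ, hae⟩ := h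
  refine ⟨fun t ht => h1 _ (by linarith), fun t => v (t + T), ?_, ?_, ?_⟩
  · have := (locallyIntegrable_map_homeomorph (Homeomorph.addRight T) (f := v)
      (μ := volume)).1 (by
        have e : Measure.map (Homeomorph.addRight T) (volume : Measure ℝ) = volume :=
          (measurePreserving_add_right volume T).map_eq
        rw [e]; exact hv)
    exact this
  · intro t
    rw [intervalIntegral.integral_comp_add_right]
    simp only [zero_add]
    rw [hφ (t + T), hφ T, add_assoc,
      intervalIntegral.integral_add_adjacent_intervals (fil_ii hv)
        (fil_ii hv)]
  · rw [ae_restrict_iff' measurableSet_Ici] at hae ⊢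
    have := (measurePreserving_add_right (volume : Measure ℝ) T).quasiMeasurePreserving.ae hae
    filter_upwards [this] with t ht ht0
    exact ht (by simp only [Set.mem_Ici] at *; linarith)

/-- Theorem (stability of admissible pseudo-equilibria, attracting case): if `x*` lies in an
attracting sliding region and the sliding dynamics is asymptotically stable at `x*`,
then `x*` is an asymptotically stable equilibrium of the Filippov system. -/
theorem attracting_sliding_asymptotically_stable {n : ℕ}
    (Ω : Set (EuclideanSpace ℝ (Fin n))) (hΩ : IsOpen Ω)
    (fL fR : EuclideanSpace ℝ (Fin n) → EuclideanSpace ℝ (Fin n))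
    (H : EuclideanSpace ℝ (Fin n) → ℝ)
    (hfL : ContDiff ℝ 1 fL) (hfR : ContDiff ℝ 1 fR) (hH : ContDiff ℝ 2 H)
    (xs : EuclideanSpace ℝ (Fin n)) (hxsΩ : xs ∈ Ω) (hxsSigma : H xs = 0)
    (hgrad : fderiv ℝ H xs ≠ 0)
    (hL : lieD fL H xs > 0) (hR : lieD fR H xs < 0)
    (hslide : ∀ N₁ ∈ 𝓝 xs, N₁ ⊆ Ω → ∃ N₂ ∈ 𝓝 xs, N₂ ⊆ N₁ ∧
      ∀ φ : ℝ → EuclideanSpace ℝ (Fin n), IsFilippovSol fL fR H Ω φ →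
        φ 0 ∈ N₂ ∩ {x | H x = 0} →
        (∀ t : ℝ, 0 ≤ t → φ t ∈ N₁) ∧ Tendsto φ atTop (𝓝 xs)) :
    (∀ N₁ ∈ 𝓝 xs, N₁ ⊆ Ω → ∃ N₂ ∈ 𝓝 xs, N₂ ⊆ N₁ ∧
      ∀ φ : ℝ → EuclideanSpace ℝ (Fin n), IsFilippovSol fL fR H Ω φ →
        φ 0 ∈ N₂ → ∀ t : ℝ, 0 ≤ t → φ t ∈ N₁) ∧
    (∃ N₃ ∈ 𝓝 xs, ∀ φ : ℝ → EuclideanSpace ℝ (Fin n), IsFilippovSol fL fR H Ω φ →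
      φ 0 ∈ N₃ → Tendsto φ atTop (𝓝 xs)) := by
  have key : ∀ N₁ ∈ 𝓝 xs, N₁ ⊆ Ω → ∃ N₂ ∈ 𝓝 xs, N₂ ⊆ N₁ ∧
      ∀ φ : ℝ → EuclideanSpace ℝ (Fin n), IsFilippovSol fL fR H Ω φ →
        φ 0 ∈ N₂ → (∀ t : ℝ, 0 ≤ t → φ t ∈ N₁) ∧ Tendsto φ atTop (𝓝 xs) := by
    intro N₁ hN₁ hN₁Ω
    obtain ⟨N₂, hN₂, hN₂₁, hsl⟩ := hslide N₁ hN₁ hN₁Ω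
    have hHd : Differentiable ℝ H := hH.differentiable (by norm_num)
    have hfd : Continuous (fderiv ℝ H) := hH.continuous_fderiv (by norm_num)
    have hcL : Continuous (fun x => fderiv ℝ H x (fL x)) := hfd.clm_apply hfL.continuous
    have hcR : Continuous (fun x => fderiv ℝ H x (fR x)) := hfd.clm_apply hfR.continuous
    simp only [lieD] at hL hR
    obtain ⟨c, hc0, hc1, hc2⟩ : ∃ c : ℝ, 0 < c ∧ c < fderiv ℝ H xs (fL xs) ∧
        fderiv ℝ H xs (fR xs) < -c := by
      obtain ⟨c, h1, h2⟩ := exists_between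
        (lt_min hL (neg_pos.2 hR) : (0:ℝ) < min _ (-(fderiv ℝ H xs (fR xs))))
      have h3 := lt_min_iff.1 h2
      exact ⟨c, h1, h3.1, by linarith [h3.2]⟩
    obtain ⟨M, hM0, hML, hMR⟩ : ∃ M : ℝ, 0 < M ∧ ‖fL xs‖ < M ∧ ‖fR xs‖ < M :=
      ⟨‖fL xs‖ + ‖fR xs‖ + 1, by positivity, by linarith [norm_nonneg (fR xs)],
        by linarith [norm_nonneg (fL xs)]⟩
    have ev : ∀ᶠ x in 𝓝 xs, x ∈ N₂ ∧ c < fderiv ℝ H x (fL x) ∧ fderiv ℝ H x (fR x) < -c ∧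
        ‖fL x‖ < M ∧ ‖fR x‖ < M := by
      filter_upwards [hN₂, hcL.continuousAt.eventually_const_lt hc1,
        hcR.continuousAt.eventually_lt_const hc2,
        hfL.continuous.norm.continuousAt.eventually_lt_const hML,
        hfR.continuous.norm.continuousAt.eventually_lt_const hMR] with x a b c d e
      exact ⟨a, b, c, d, e⟩
    obtain ⟨δ, hδ0, hδ⟩ := Metric.eventually_nhds_iff_ball.1 ev
    set τ : ℝ := δ / (2 * M) with hτdef
    have hτ : 0 < τ := by positivity
    have hMτ : δ / 2 + M * τ ≤ δ := by
      have : M * τ = δ / 2 := by rw [hτdef]; field_simp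
      linarith
    have hHev : ∀ᶠ x in 𝓝 xs, |H x| < c * τ := by
      apply hH.continuous.abs.continuousAt.eventually_lt_const
      simp only [hxsSigma, abs_zero]; positivity
    refine ⟨Metric.ball xs (δ / 2) ∩ {x | |H x| < c * τ},
      inter_mem (Metric.ball_mem_nhds _ (by positivity)) hHev, ?_, ?_⟩
    · intro x hx
      exact hN₂₁ (hδ x (Metric.ball_subset_ball (by linarith) hx.1)).1
    intro φ hφsol hφ0
    have hsol := hφsol
    obtain ⟨hφΩ, v, hvi, hφ, hae⟩ := hsol
    have hφc := fil_continuous φ v hvi hφ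
    rw [ae_restrict_iff' measurableSet_Ici] at hae
    have hin : ∀ t ∈ Set.Icc 0 τ, φ t ∈ Metric.ball xs δ := by
      apply fil_confine φ v xs δ (δ / 2) M τ hM0.le hφc hφ ?_ hφ0.1 hMτ
      filter_upwards [hae] with t ht ht0 htb
      obtain ⟨-, -, -, hl, hr⟩ := hδ _ htb
      rcases ht ht0 with ⟨-, h⟩ | ⟨-, h⟩ | ⟨-, s, hs, h⟩
      · rw [h]; exact hl.le
      · rw [h]; exact hr.le
      · rw [h]
        calc _ ≤ ‖(1 - s) • fL (φ t)‖ + ‖s • fR (φ t)‖ := norm_add_le _ _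
          _ = (1 - s) * ‖fL (φ t)‖ + s * ‖fR (φ t)‖ := by
            rw [norm_smul, norm_smul, Real.norm_of_nonneg hs.1,
              Real.norm_of_nonneg (sub_nonneg.2 hs.2)]
          _ ≤ (1 - s) * M + s * M := by
            gcongr
            · exact sub_nonneg.2 hs.2
            · exact hs.1
          _ = M := by ring
    have hHlt : |H (φ 0)| < c * τ := hφ0.2
    obtain ⟨T, hT, hTH⟩ : ∃ T ∈ Set.Icc 0 τ, H (φ T) = 0 := by
      rcases le_total 0 (H (φ 0)) with h | h
      · apply fil_hit φ v H fR (Metric.ball xs δ) c τ hτ.le hφc hfR.continuous hHd hφ ?_ hin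
          (fun x hx => (hδ x hx).2.2.1.le) h (lt_of_abs_lt hHlt)
        filter_upwards [hae] with t ht ht0 hpos
        rcases ht ht0 with ⟨h', h⟩ | ⟨-, h⟩ | ⟨h', -⟩
        · linarith
        · exact h
        · linarith
      · obtain ⟨T, hT, hTH⟩ : ∃ T ∈ Set.Icc 0 τ, (fun x => -H x) (φ T) = 0 := by
          apply fil_hit φ v (fun x => -H x) fL (Metric.ball xs δ) c τ hτ.le hφc hfL.continuous
            hHd.neg hφ ?_ hin ?_ (neg_nonneg.2 h) (lt_of_le_of_lt (neg_le_abs _) hHlt)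
          · filter_upwards [hae] with t ht ht0 hpos
            rcases ht ht0 with ⟨-, h⟩ | ⟨h', -⟩ | ⟨h', -⟩
            · exact h
            · linarith
            · linarith
          · intro x hx
            rw [fderiv_fun_neg]
            have := (hδ x hx).2.1
            simp only [neg_apply]
            linarith
        exact ⟨T, hT, neg_eq_zero.1 hTH⟩
    obtain ⟨hA, hB⟩ := hsl _ (fil_shift fL fR H Ω φ hφsol T hT.1)
      (by
        simp only [zero_add]
        exact ⟨(hδ _ (hin T hT)).1, hTH⟩)
    refine ⟨fun t ht => ?_, ?_⟩
    · rcases le_total t T with h | h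
      · exact hN₂₁ (hδ _ (hin t ⟨ht, h.trans hT.2⟩)).1
      · have := hA (t - T) (by linarith)
        simpa using this
    · have := hB.comp (tendsto_atTop_add_const_right atTop (-T) tendsto_id)
      refine this.congr fun t => ?_
      simp
  refine ⟨fun N₁ h1 h2 => ?_, ?_⟩
  · obtain ⟨N₂, a, b, h⟩ := key N₁ h1 h2
    exact ⟨N₂, a, b, fun φ hs h0 => (h φ hs h0).1⟩
  · obtain ⟨N₂, a, -, h⟩ := key Ω (hΩ.mem_nhds hxsΩ) subset_rfl
    exact ⟨N₂, a, fun φ hs h0 => (h φ hs h0).2⟩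
end

section
/- Let f^L, f^R : ℝⁿ → ℝⁿ be C³, H : ℝⁿ → ℝ be C⁴, and suppose there is a C² function α : ℝⁿ → ℝ with 𝓛_{f^L}H(x) − 𝓛_{f^R}H(x) = α(x)·H(x) for all x (so the system is second-order). Write V = 𝓛_{f^L}H. Let φ^L, φ^R : ℝ × ℝⁿ → ℝⁿ be global flows of f^L and f^R respectively, i.e. φ^Z(0,x) = x and ∂_t φ^Z(t,x) = f^Z(φ^Z(t,x)) for all t, x and Z ∈ {L,R}. Let x₀ satisfy H(x₀) = 0, V(x₀) = 0, 𝓛²_{f^L}H(x₀) > 0 and 𝓛²_{f^R}H(x₀) < 0 (an invisible–invisible tangency point). Then there exist δ > 0 and K > 0 such that: for every x with H(x) = 0, ‖x − x₀‖ < δ and ν := V(x) > 0, there exist τ_R > 0 and τ_L > 0 such that, setting x' = φ^R(τ_R, x), P = φ^L(τ_L, x') and τ = τ_R + τ_L, one has H(x') = 0 with H(φ^R(t,x)) > 0 for all t ∈ (0, τ_R); H(P) = 0 with H(φ^L(t,x')) < 0 for all t ∈ (0, τ_L); and the estimates |τ − 2(1/𝓛²_{f^L}H(x) − 1/𝓛²_{f^R}H(x))·ν|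 ≤ K ν², ‖P − x − 2(f^L(x)/𝓛²_{f^L}H(x) − f^R(x)/𝓛²_{f^R}H(x))·ν‖ ≤ K ν², and |V(P) − ν − (2Λ(x)/3)·ν²| ≤ K ν³, where Λ(x) = 𝓛³_{f^L}H(x)/(𝓛²_{f^L}H(x))² − 𝓛³_{f^R}H(x)/(𝓛²_{f^R}H(x))². -/
/-- Iterated Lie derivatives: `lieIter f h m = 𝓛_f^m h`, defined recursively by
`𝓛_f^0 h = h` and `𝓛_f^{m+1} h (x) = D(𝓛_f^m h)(x)[f(x)]`. -/
noncomputable def lieIter {n : ℕ} (f : EuclideanSpace ℝ (Fin n) → EuclideanSpace ℝ (Fin n))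
    (h : EuclideanSpace ℝ (Fin n) → ℝ) : ℕ → EuclideanSpace ℝ (Fin n) → ℝ
  | 0 => h
  | m + 1 => fun x => fderiv ℝ (lieIter f h m) x (f x)


open Filter Topology Asymptotics Set

lemma lieIter_succ_contDiff {n : ℕ} {f : EuclideanSpace ℝ (Fin n) → EuclideanSpace ℝ (Fin n)}
    {h : EuclideanSpace ℝ (Fin n) → ℝ} {k m : ℕ} (hf : ContDiff ℝ 3 f) (hk : k ≤ 3)
    (hm : ContDiff ℝ ((k + 1 : ℕ) : WithTop ℕ∞) (lieIter f h m)) :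
    ContDiff ℝ (k : WithTop ℕ∞) (lieIter f h (m + 1)) := by
  have h1 : ContDiff ℝ (k : WithTop ℕ∞) (fderiv ℝ (lieIter f h m)) :=
    hm.fderiv_right (by norm_cast)
  have h2 : ContDiff ℝ (k : WithTop ℕ∞) f := hf.of_le (by exact_mod_cast hk)
  exact h1.clm_apply h2

lemma lieIter_neg {n : ℕ} (f : EuclideanSpace ℝ (Fin n) → EuclideanSpace ℝ (Fin n))
    (h : EuclideanSpace ℝ (Fin n) → ℝ) (m : ℕ) (x : EuclideanSpace ℝ (Fin n)) :
    lieIter f (fun y => - h y) m x = - lieIter f h m x := by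
  induction m generalizing x with
  | zero => rfl
  | succ k ih =>
    have : lieIter f (fun y => - h y) k = fun y => - lieIter f h k y := funext ih
    simp only [lieIter]
    rw [this, fderiv_fun_neg]
    simp

lemma mvt_pow {F : Type*} [NormedAddCommGroup F] [NormedSpace ℝ F] {G G' : ℝ → F} {M T : ℝ} {k : ℕ}
    (hM : 0 ≤ M)
    (hG : ∀ t, HasDerivAt G (G' t) t) (h0 : G 0 = 0)
    (hb : ∀ t ∈ Icc (0:ℝ) T, ‖G' t‖ ≤ M * t ^ k) :
    ∀ t ∈ Icc (0:ℝ) T, ‖G t‖ ≤ M * t ^ (k + 1) := by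
  intro t ht
  have := norm_image_sub_le_of_norm_deriv_le_segment' (f := G) (f' := G') (a := 0) (b := t)
    (C := M * t ^ k) (fun s _ => (hG s).hasDerivWithinAt)
    (fun s hs => (hb s ⟨hs.1, hs.2.le.trans ht.2⟩).trans (by
      have := hs.1
      have := hs.2.le
      gcongr)) t ⟨ht.1, le_rfl⟩
  rw [h0, sub_zero, sub_zero] at this
  rw [pow_succ, ← mul_assoc]; exact this

lemma drift {E F : Type*} [NormedAddCommGroup E] [NormedSpace ℝ E] [NormedAddCommGroup F]
    [NormedSpace ℝ F] {f : E → E} (hf : Continuous f) {φ : ℝ → E → E}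
    (hφ0 : ∀ x, φ 0 x = x) (hφ : ∀ t x, HasDerivAt (fun s => φ s x) (f (φ t x)) t)
    {u : E → F} (hu : ContDiff ℝ 1 u) (x₀ : E) :
    ∃ T > (0:ℝ), ∃ M > (0:ℝ), ∀ᶠ x in 𝓝 x₀, ∀ t ∈ Icc (0:ℝ) T, ‖u (φ t x) - u x‖ ≤ M * t := by
  obtain ⟨C, hC, hCb⟩ := ((hu.contDiffAt (x := x₀)).hasStrictFDerivAt one_ne_zero).isBigO_sub.exists_pos
  rw [isBigOWith_iff, nhds_prod_eq] at hCb
  have h1 : ∀ᶠ x in 𝓝 x₀, ‖f x‖ < ‖f x₀‖ + 1 :=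
    hf.norm.continuousAt.eventually (gt_mem_nhds (by linarith))
  obtain ⟨s, hs, hsb⟩ := (eventually_prod_self_iff (r := fun a b => ‖u a - u b‖ ≤ C * ‖a - b‖)).1 hCb
  obtain ⟨r, hr, hrb⟩ := Metric.eventually_nhds_iff.1 (h1.and hs)
  set M := ‖f x₀‖ + 1 with hM
  have hMp : 0 < M := by positivity
  refine ⟨r / 4 / M, by positivity, C * M, by positivity, ?_⟩
  filter_upwards [Metric.ball_mem_nhds x₀ (half_pos hr)] with x hx t ht
  rw [Metric.mem_ball] at hx
  have key : ∀ ⦃t⦄, t ∈ Icc (0:ℝ) (r / 4 / M) → ‖φ t x - x‖ ≤ M * t := by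
    refine image_norm_le_of_norm_deriv_right_lt_deriv_boundary (f := fun t => φ t x - x)
      (f' := fun t => f (φ t x)) (B' := fun _ => M)
      (fun t _ => ((hφ t x).sub_const x).continuousAt.continuousWithinAt)
      (fun t _ => ((hφ t x).sub_const x).hasDerivWithinAt) (by simp [hφ0])
      (fun t => by simpa using (hasDerivAt_id t).const_mul M) ?_
    intro t ht h
    refine (hrb ?_).1
    have h3 : M * t ≤ r / 4 := by
      have := mul_le_mul_of_nonneg_left ht.2.le hMp.le
      rwa [mul_div_cancel₀ _ hMp.ne'] at this
    have h4 := dist_triangle (φ t x) x x₀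
    rw [dist_eq_norm (φ t x) x] at h4
    linarith
  have h2 := key ht
  have h3 : M * t ≤ r / 4 := by
    have := mul_le_mul_of_nonneg_left ht.2 hMp.le
    rwa [mul_div_cancel₀ _ hMp.ne'] at this
  have h4 := dist_triangle (φ t x) x x₀
  rw [dist_eq_norm (φ t x) x] at h4
  have h5 := hsb (φ t x) (hrb (by linarith)).2 x (hrb (by linarith)).2
  calc _ ≤ _ := h5
    _ ≤ C * (M * t) := by gcongr
    _ = _ := by ring

/-- Uniform Taylor expansion along the flow. -/
lemma taylor_flow {n : ℕ} {f : EuclideanSpace ℝ (Fin n) → EuclideanSpace ℝ (Fin n)}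
    {h : EuclideanSpace ℝ (Fin n) → ℝ} (hf : ContDiff ℝ 3 f) (hh : ContDiff ℝ 4 h)
    {φ : ℝ → EuclideanSpace ℝ (Fin n) → EuclideanSpace ℝ (Fin n)}
    (hφ0 : ∀ x, φ 0 x = x) (hφ : ∀ t x, HasDerivAt (fun s => φ s x) (f (φ t x)) t)
    (x₀ : EuclideanSpace ℝ (Fin n)) :
    ∃ T > (0:ℝ), ∃ M > (0:ℝ), ∀ᶠ x in 𝓝 x₀, ∀ t ∈ Icc (0:ℝ) T,
      ‖φ t x - x‖ ≤ M * t ∧ ‖φ t x - x - t • f x‖ ≤ M * t ^ 2 ∧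
      |lieIter f h 2 (φ t x) - lieIter f h 2 x| ≤ M * t ∧
      |lieIter f h 1 (φ t x) - lieIter f h 1 x - lieIter f h 2 x * t - lieIter f h 3 x * t ^ 2 / 2|
        ≤ M * t ^ 3 ∧
      |h (φ t x) - h x - lieIter f h 1 x * t - lieIter f h 2 x * t ^ 2 / 2
        - lieIter f h 3 x * t ^ 3 / 6| ≤ M * t ^ 4 := by
  have c0 : ContDiff ℝ ((3 + 1 : ℕ) : WithTop ℕ∞) (lieIter f h 0) := by
    exact_mod_cast hh
  have c1 : ContDiff ℝ ((2 + 1 : ℕ) : WithTop ℕ∞) (lieIter f h 1) := lieIter_succ_contDiff hf (by norm_num) c0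
  have c2 : ContDiff ℝ ((1 + 1 : ℕ) : WithTop ℕ∞) (lieIter f h 2) := lieIter_succ_contDiff hf (by norm_num) c1
  have c3 : ContDiff ℝ ((1 : ℕ) : WithTop ℕ∞) (lieIter f h 3) := lieIter_succ_contDiff hf (by norm_num) c2
  have hd : ∀ m, Differentiable ℝ (lieIter f h m) → ∀ x t,
      HasDerivAt (fun s => lieIter f h m (φ s x)) (lieIter f h (m + 1) (φ t x)) t := by
    intro m hm x t
    exact (hm (φ t x)).hasFDerivAt.comp_hasDerivAt t (hφ t x)
  have d0 := hd 0 (c0.differentiable (by simp))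
  have d1 := hd 1 (c1.differentiable (by simp))
  have d2 := hd 2 (c2.differentiable (by simp))
  have hu : ContDiff ℝ 1 (fun x => (x, f x, lieIter f h 2 x, lieIter f h 3 x)) := by
    refine contDiff_id.prodMk ((hf.of_le (by norm_num)).prodMk (ContDiff.prodMk (c2.of_le (by norm_num)) ?_))
    exact_mod_cast c3
  obtain ⟨T, hT, M, hM, hb⟩ := drift hf.continuous hφ0 hφ hu x₀
  refine ⟨T, hT, M, hM, ?_⟩
  filter_upwards [hb] with x hx
  have b0 : ∀ t ∈ Icc (0:ℝ) T, ‖φ t x - x‖ ≤ M * t ^ 1 := fun t ht => by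
    rw [pow_one]
    exact (norm_fst_le _).trans (hx t ht)
  have bf : ∀ t ∈ Icc (0:ℝ) T, ‖f (φ t x) - f x‖ ≤ M * t ^ 1 := fun t ht => by
    rw [pow_one]
    exact (norm_fst_le _).trans ((norm_snd_le _).trans (hx t ht))
  have b2 : ∀ t ∈ Icc (0:ℝ) T, ‖lieIter f h 2 (φ t x) - lieIter f h 2 x‖ ≤ M * t ^ 1 := fun t ht => by
    rw [pow_one]
    exact (norm_fst_le _).trans ((norm_snd_le _).trans ((norm_snd_le _).trans (hx t ht)))
  have b3 : ∀ t ∈ Icc (0:ℝ) T, ‖lieIter f h 3 (φ t x) - lieIter f h 3 x‖ ≤ M * t ^ 1 := fun t ht => by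
    rw [pow_one]
    exact (norm_snd_le _).trans ((norm_snd_le _).trans ((norm_snd_le _).trans (hx t ht)))
  have e0 := mvt_pow (G := fun t => φ t x - x - t • f x) hM.le
    (fun t => by simpa using ((hφ t x).sub_const x).fun_sub ((hasDerivAt_id t).smul_const (f x)))
    (by simp [hφ0]) bf
  have e2 := mvt_pow (G := fun t => lieIter f h 2 (φ t x) - lieIter f h 2 x - lieIter f h 3 x * t) hM.le
    (fun t => by simpa using ((d2 x t).sub_const (lieIter f h 2 x)).fun_sub ((hasDerivAt_id t).const_mul (lieIter f h 3 x)))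
    (by simp [hφ0]) b3
  have e1 := mvt_pow (G := fun t => lieIter f h 1 (φ t x) - lieIter f h 1 x - lieIter f h 2 x * t
      - lieIter f h 3 x * t ^ 2 / 2) hM.le
    (fun t => by
      have := (((d1 x t).sub_const (lieIter f h 1 x)).sub ((hasDerivAt_id t).const_mul (lieIter f h 2 x))).sub
        (((hasDerivAt_pow 2 t).const_mul (lieIter f h 3 x)).div_const 2)
      refine this.congr_deriv ?_
      simp; ring)
    (by simp [hφ0]) e2
  have e00 := mvt_pow (G := fun t => lieIter f h 0 (φ t x) - lieIter f h 0 x - lieIter f h 1 x * t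
      - lieIter f h 2 x * t ^ 2 / 2 - lieIter f h 3 x * t ^ 3 / 6) hM.le
    (fun t => by
      have := ((((d0 x t).sub_const (lieIter f h 0 x)).sub ((hasDerivAt_id t).const_mul (lieIter f h 1 x))).sub
        (((hasDerivAt_pow 2 t).const_mul (lieIter f h 2 x)).div_const 2)).sub
        (((hasDerivAt_pow 3 t).const_mul (lieIter f h 3 x)).div_const 6)
      refine this.congr_deriv ?_
      simp; ring)
    (by simp [hφ0]) e1
  intro t ht
  have := b0 t ht
  have h2 := b2 t ht
  rw [pow_one] at this h2
  exact ⟨this, e0 t ht, h2, e1 t ht, e00 t ht⟩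

/-- The section of crossing points used for the half-return map. -/
def sect {n : ℕ} (f : EuclideanSpace ℝ (Fin n) → EuclideanSpace ℝ (Fin n))
    (h : EuclideanSpace ℝ (Fin n) → ℝ) : Set (EuclideanSpace ℝ (Fin n)) :=
  {x | h x = 0 ∧ 0 < lieIter f h 1 x}

/-- existence of the return time -/
lemma half_exists {n : ℕ} {f : EuclideanSpace ℝ (Fin n) → EuclideanSpace ℝ (Fin n)}
    {h : EuclideanSpace ℝ (Fin n) → ℝ} (hf : ContDiff ℝ 3 f) (hh : ContDiff ℝ 4 h)
    {φ : ℝ → EuclideanSpace ℝ (Fin n) → EuclideanSpace ℝ (Fin n)}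
    (hφ0 : ∀ x, φ 0 x = x) (hφ : ∀ t x, HasDerivAt (fun s => φ s x) (f (φ t x)) t)
    (x₀ : EuclideanSpace ℝ (Fin n)) (h1 : lieIter f h 1 x₀ = 0) (h2 : lieIter f h 2 x₀ < 0) :
    ∃ C > (0:ℝ), ∀ᶠ x in 𝓝[sect f h] x₀, ∃ τ > (0:ℝ), τ ≤ C * lieIter f h 1 x ∧
      h (φ τ x) = 0 ∧ (∀ t ∈ Ioo 0 τ, 0 < h (φ t x)) ∧
      ‖φ τ x - x‖ ≤ C * τ ∧ ‖φ τ x - x - τ • f x‖ ≤ C * τ ^ 2 ∧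
      |lieIter f h 1 (φ τ x) - lieIter f h 1 x - lieIter f h 2 x * τ - lieIter f h 3 x * τ ^ 2 / 2|
        ≤ C * τ ^ 3 ∧
      |lieIter f h 1 x + lieIter f h 2 x * τ / 2 + lieIter f h 3 x * τ ^ 2 / 6| ≤ C * τ ^ 3 := by
  have c0 : ContDiff ℝ ((3 + 1 : ℕ) : WithTop ℕ∞) (lieIter f h 0) := by
    exact_mod_cast hh
  have c1 : ContDiff ℝ ((2 + 1 : ℕ) : WithTop ℕ∞) (lieIter f h 1) := lieIter_succ_contDiff hf (by norm_num) c0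
  have c2 : ContDiff ℝ ((1 + 1 : ℕ) : WithTop ℕ∞) (lieIter f h 2) := lieIter_succ_contDiff hf (by norm_num) c1
  have c3 : ContDiff ℝ ((1 : ℕ) : WithTop ℕ∞) (lieIter f h 3) := lieIter_succ_contDiff hf (by norm_num) c2
  have hd : ∀ m, Differentiable ℝ (lieIter f h m) → ∀ x t,
      HasDerivAt (fun s => lieIter f h m (φ s x)) (lieIter f h (m + 1) (φ t x)) t := by
    intro m hm x t
    exact (hm (φ t x)).hasFDerivAt.comp_hasDerivAt t (hφ t x)
  have d0 := hd 0 (c0.differentiable (by simp))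
  have d1 := hd 1 (c1.differentiable (by simp))
  obtain ⟨T, hT, M, hM, hb⟩ := taylor_flow hf hh hφ0 hφ x₀
  set c := - lieIter f h 2 x₀ / 2 with hc
  have hcp : 0 < c := by rw [hc]; linarith
  set B := |lieIter f h 3 x₀| + 1 with hB
  have hBp : 0 < B := by positivity
  -- eventual bounds
  have ev2 : ∀ᶠ x in 𝓝 x₀, lieIter f h 2 x < -c :=
    c2.continuous.continuousAt.eventually (gt_mem_nhds (by rw [hc]; linarith))
  have ev3 : ∀ᶠ x in 𝓝 x₀, |lieIter f h 3 x| < B :=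
    c3.continuous.abs.continuousAt.eventually (gt_mem_nhds (by rw [hB]; linarith))
  -- the time scale
  obtain ⟨S, hSp, hST, hS1, hSc, hSM⟩ : ∃ S > (0:ℝ), S ≤ T ∧ S ≤ 1 ∧ (B + M) * S ≤ c / 4 ∧ M * S < c := by
    refine ⟨min (min T 1) (min (c / 4 / (B + M)) (c / 2 / M)), by positivity, ?_, ?_, ?_, ?_⟩
    · exact (min_le_left _ _).trans (min_le_left _ _)
    · exact (min_le_left _ _).trans (min_le_right _ _)
    · calc (B + M) * _ ≤ (B + M) * (c / 4 / (B + M)) := by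
            gcongr; exact (min_le_right _ _).trans (min_le_left _ _)
        _ = c / 4 := by field_simp
    · calc M * _ ≤ M * (c / 2 / M) := by
            gcongr; exact (min_le_right _ _).trans (min_le_right _ _)
        _ = c / 2 := by field_simp
        _ < c := by linarith
  have ev1 : ∀ᶠ x in 𝓝 x₀, lieIter f h 1 x < c / 4 * S :=
    c1.continuous.continuousAt.eventually (gt_mem_nhds (by rw [h1]; positivity))
  refine ⟨M + 4 / c, by positivity, ?_⟩
  filter_upwards [mem_nhdsWithin_of_mem_nhds hb, mem_nhdsWithin_of_mem_nhds ev1,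
    mem_nhdsWithin_of_mem_nhds ev2, mem_nhdsWithin_of_mem_nhds ev3, self_mem_nhdsWithin]
    with x hx hν ha hbx hsx
  obtain ⟨hx0, hνp⟩ := hsx
  set ν := lieIter f h 1 x
  set a := lieIter f h 2 x
  set b := lieIter f h 3 x
  have hcont : Continuous (fun t => h (φ t x)) :=
    continuous_iff_continuousAt.2 fun t => (d0 x t).continuousAt
  -- simplified bound
  have hg : ∀ t ∈ Icc (0:ℝ) S, |h (φ t x) - ν * t - a * t ^ 2 / 2| ≤ c / 4 * t ^ 2 := by
    intro t ht
    have h5 := (hx t ⟨ht.1, ht.2.trans hST⟩).2.2.2.2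
    rw [hx0] at h5
    have e : h (φ t x) - ν * t - a * t ^ 2 / 2
      = (h (φ t x) - 0 - ν * t - a * t ^ 2 / 2 - b * t ^ 3 / 6) + b * t ^ 3 / 6 := by ring
    rw [e]
    have t0 := ht.1
    have t1 : t ≤ 1 := ht.2.trans hS1
    have e2 : |b * t ^ 3 / 6| ≤ B * t ^ 3 := by
      rw [abs_div, abs_mul, abs_of_nonneg (by positivity : (0:ℝ) ≤ t ^ 3), abs_of_pos (by norm_num : (0:ℝ) < 6)]
      have : |b| * t ^ 3 ≤ B * t ^ 3 := by gcongr
      have : 0 ≤ B * t ^ 3 := by positivity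
      linarith
    calc _ ≤ _ := abs_add_le _ _
      _ ≤ M * t ^ 4 + B * t ^ 3 := add_le_add h5 e2
      _ ≤ M * t ^ 3 + B * t ^ 3 := by
        gcongr ?_ + _
        gcongr M * ?_
        exact pow_le_pow_of_le_one t0 t1 (by norm_num)
      _ = ((B + M) * t) * t ^ 2 := by ring
      _ ≤ c / 4 * t ^ 2 := by
        gcongr
        refine le_trans ?_ hSc
        gcongr
        exact ht.2
  -- endpoint where h ≤ 0
  set t1 := 4 / c * ν with ht1
  have ht1p : 0 < t1 := by positivity
  have ht1S : t1 ≤ S := by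
    rw [ht1, div_mul_eq_mul_div, div_le_iff₀ hcp]; linarith
  have hend : h (φ t1 x) ≤ 0 := by
    have h6 := (abs_le.1 (hg t1 ⟨ht1p.le, ht1S⟩)).2
    have h7 : ν = c / 4 * t1 := by rw [ht1]; field_simp
    have h8 : a * t1 ^ 2 ≤ -c * t1 ^ 2 := by gcongr
    rw [h7] at h6
    nlinarith
  -- small time where h > 0
  obtain ⟨t2, ht2p, ht2l, ht2⟩ : ∃ t2 > 0, t2 ≤ t1 ∧ 0 < h (φ t2 x) := by
    have hD : 0 < c - a := by linarith
    refine ⟨min t1 (ν / (c - a)), by positivity, min_le_left _ _, ?_⟩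
    set t2 := min t1 (ν / (c - a))
    have ht2p : 0 < t2 := by positivity
    have h6 := (abs_le.1 (hg t2 ⟨ht2p.le, (min_le_left _ _).trans ht1S⟩)).1
    have h7 : t2 * (c - a) ≤ ν := by
      rw [← le_div_iff₀ hD]; exact min_le_right _ _
    have h8 : t2 * (c - a) * t2 ≤ ν * t2 := by gcongr
    have h9 : 0 < t2 ^ 2 * c := by positivity
    have h10 : 0 < t2 ^ 2 * (-a) := by
      have : 0 < -a := by linarith
      positivity
    nlinarith
  obtain ⟨τ, hτ, hτ0⟩ := intermediate_value_Icc' ht2l hcont.continuousOn ⟨hend, ht2.le⟩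
  simp only at hτ0
  have hτp : 0 < τ := ht2p.trans_le hτ.1
  have hτS : τ ≤ S := hτ.2.trans ht1S
  have hτT : τ ∈ Icc 0 T := ⟨hτp.le, hτS.trans hST⟩
  obtain ⟨r1, r2, r3, r4, r5⟩ := hx τ hτT
  have hcC : M ≤ M + 4 / c := by
    have : 0 < 4 / c := by positivity
    linarith
  refine ⟨τ, hτp, ?_, hτ0, ?_, r1.trans (by gcongr), r2.trans (by gcongr), r4.trans (by gcongr), ?_⟩
  · calc τ ≤ 4 / c * ν := hτ.2
      _ ≤ _ := by gcongr; linarith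
  · intro t ht
    have hsc : StrictConcaveOn ℝ (Icc 0 S) (fun t => h (φ t x)) := by
      refine strictConcaveOn_of_deriv2_neg' (convex_Icc _ _) hcont.continuousOn ?_
      intro t ht
      have e1 : deriv (fun t => h (φ t x)) = fun t => lieIter f h 1 (φ t x) :=
        funext fun t => (d0 x t).deriv
      have e2 : deriv^[2] (fun t => h (φ t x)) t = lieIter f h 2 (φ t x) := by
        simp only [Function.iterate_succ, Function.iterate_zero, Function.comp, id]
        rw [e1]; exact (d1 x t).deriv
      rw [e2]
      have h6 := (abs_le.1 (hx t ⟨ht.1, ht.2.trans hST⟩).2.2.1).2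
      have : M * t ≤ M * S := by gcongr; exact ht.2
      linarith
    have h7 := hsc.lt_on_openSegment (x := 0) (y := τ) ⟨le_rfl, hSp.le⟩ ⟨hτp.le, hτS⟩ hτp.ne
      (z := t) (by rw [openSegment_eq_Ioo hτp]; exact ht)
    simpa [hφ0, hx0, hτ0] using h7
  · rw [hτ0, hx0] at r5
    have e : |0 - 0 - ν * τ - a * τ ^ 2 / 2 - b * τ ^ 3 / 6|
        = |ν + a * τ / 2 + b * τ ^ 2 / 6| * τ := by
      rw [← abs_of_pos hτp, ← abs_mul, abs_of_pos hτp, ← abs_neg]; congr 1; ring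
    rw [e] at r5
    have : |ν + a * τ / 2 + b * τ ^ 2 / 6| ≤ M * τ ^ 3 :=
      le_of_mul_le_mul_right (by linarith [r5, (by ring : M * τ ^ 4 = M * τ ^ 3 * τ)]) hτp
    exact this.trans (by gcongr)

lemma ev_choice {X : Type*} {l : Filter X} {p : X → ℝ → Prop} (h : ∀ᶠ x in l, ∃ t, p x t) :
    ∃ τ : X → ℝ, ∀ᶠ x in l, p x (τ x) :=
  ⟨fun x => Classical.epsilon (p x), h.mono fun _ hx => Classical.epsilon_spec hx⟩

lemma half_map {n : ℕ} {f : EuclideanSpace ℝ (Fin n) → EuclideanSpace ℝ (Fin n)}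
    {h : EuclideanSpace ℝ (Fin n) → ℝ} (hf : ContDiff ℝ 3 f) (hh : ContDiff ℝ 4 h)
    {φ : ℝ → EuclideanSpace ℝ (Fin n) → EuclideanSpace ℝ (Fin n)}
    (hφ0 : ∀ x, φ 0 x = x) (hφ : ∀ t x, HasDerivAt (fun s => φ s x) (f (φ t x)) t)
    (x₀ : EuclideanSpace ℝ (Fin n)) (h1 : lieIter f h 1 x₀ = 0) (h2 : lieIter f h 2 x₀ < 0) :
    ∃ τ : EuclideanSpace ℝ (Fin n) → ℝ,
      (∀ᶠ x in 𝓝[sect f h] x₀, 0 < τ x ∧ h (φ (τ x) x) = 0 ∧ ∀ t ∈ Ioo 0 (τ x), 0 < h (φ t x)) ∧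
      (τ =O[𝓝[sect f h] x₀] lieIter f h 1) ∧
      ((fun x => τ x + 2 * lieIter f h 1 x / lieIter f h 2 x)
        =O[𝓝[sect f h] x₀] fun x => lieIter f h 1 x ^ 2) ∧
      ((fun x => φ (τ x) x - x) =O[𝓝[sect f h] x₀] lieIter f h 1) ∧
      ((fun x => φ (τ x) x - x - τ x • f x) =O[𝓝[sect f h] x₀] fun x => lieIter f h 1 x ^ 2) ∧
      ((fun x => lieIter f h 1 (φ (τ x) x) + lieIter f h 1 x
          - 2 / 3 * (lieIter f h 3 x / lieIter f h 2 x ^ 2) * lieIter f h 1 x ^ 2)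
        =O[𝓝[sect f h] x₀] fun x => lieIter f h 1 x ^ 3) := by
  have c0 : ContDiff ℝ ((3 + 1 : ℕ) : WithTop ℕ∞) (lieIter f h 0) := by
    exact_mod_cast hh
  have c1 : ContDiff ℝ ((2 + 1 : ℕ) : WithTop ℕ∞) (lieIter f h 1) := lieIter_succ_contDiff hf (by norm_num) c0
  have c2 : ContDiff ℝ ((1 + 1 : ℕ) : WithTop ℕ∞) (lieIter f h 2) := lieIter_succ_contDiff hf (by norm_num) c1
  have c3 : ContDiff ℝ ((1 : ℕ) : WithTop ℕ∞) (lieIter f h 3) := lieIter_succ_contDiff hf (by norm_num) c2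
  obtain ⟨C, hC, hev⟩ := half_exists hf hh hφ0 hφ x₀ h1 h2
  obtain ⟨τ, hτ⟩ := ev_choice hev
  set l := 𝓝[sect f h] x₀ with hl
  have hle : l ≤ 𝓝 x₀ := nhdsWithin_le_nhds
  have hνpos : ∀ᶠ x in l, 0 < lieIter f h 1 x := by
    filter_upwards [self_mem_nhdsWithin] with x hx using hx.2
  have hane : ∀ᶠ x in l, lieIter f h 2 x ≠ 0 :=
    hle (c2.continuous.continuousAt.eventually_ne h2.ne)
  have O1 : τ =O[l] lieIter f h 1 := by
    refine IsBigO.of_bound C ?_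
    filter_upwards [hτ, hνpos] with x hx hp
    rw [Real.norm_of_nonneg hx.1.le, Real.norm_of_nonneg hp.le]
    exact hx.2.1
  have Oinv : (fun x => (lieIter f h 2 x)⁻¹) =O[l] (fun _ => (1:ℝ)) :=
    (((c2.continuous.continuousAt (x := x₀)).inv₀ h2.ne).tendsto.mono_left hle).isBigO_one ℝ
  have Ob : (lieIter f h 3) =O[l] (fun _ => (1:ℝ)) :=
    ((c3.continuous.continuousAt (x := x₀)).tendsto.mono_left hle).isBigO_one ℝ
  have hνto : Tendsto (lieIter f h 1) l (𝓝 0) := by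
    have := (c1.continuous.continuousAt (x := x₀)).tendsto.mono_left hle
    rwa [h1] at this
  have O32 : (fun x => lieIter f h 1 x ^ 3) =O[l] fun x => lieIter f h 1 x ^ 2 := by
    have := (hνto.isBigO_one ℝ).mul (isBigO_refl (fun x => lieIter f h 1 x ^ 2) l)
    refine this.congr (fun x => by ring) (fun x => by ring)
  have Oe0 : (fun x => lieIter f h 1 x + lieIter f h 2 x * τ x / 2 + lieIter f h 3 x * τ x ^ 2 / 6)
      =O[l] fun x => lieIter f h 1 x ^ 3 := by
    refine IsBigO.trans (g := fun x => τ x ^ 3) (IsBigO.of_bound C ?_) (O1.pow 3)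
    filter_upwards [hτ] with x hx
    rw [norm_pow, Real.norm_of_nonneg hx.1.le]
    exact hx.2.2.2.2.2.2.2
  have Oe1 : (fun x => lieIter f h 1 (φ (τ x) x) - lieIter f h 1 x - lieIter f h 2 x * τ x
      - lieIter f h 3 x * τ x ^ 2 / 2) =O[l] fun x => lieIter f h 1 x ^ 3 := by
    refine IsBigO.trans (g := fun x => τ x ^ 3) (IsBigO.of_bound C ?_) (O1.pow 3)
    filter_upwards [hτ] with x hx
    rw [norm_pow, Real.norm_of_nonneg hx.1.le]
    exact hx.2.2.2.2.2.2.1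
  have Obτ : (fun x => lieIter f h 3 x * τ x ^ 2) =O[l] fun x => lieIter f h 1 x ^ 2 :=
    (Ob.mul (O1.pow 2)).congr_right fun x => by ring
  have O2 : (fun x => τ x + 2 * lieIter f h 1 x / lieIter f h 2 x) =O[l] fun x => lieIter f h 1 x ^ 2 := by
    have := Oinv.mul (((Oe0.trans O32).sub (Obτ.const_mul_left (1/6))).const_mul_left 2)
    refine this.congr' ?_ (.of_forall fun x => by ring)
    filter_upwards [hane] with x hx
    field_simp
    ring
  refine ⟨τ, ?_, O1, O2, ?_, ?_, ?_⟩
  · filter_upwards [hτ] with x hx using ⟨hx.1, hx.2.2.1, hx.2.2.2.1⟩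
  · refine IsBigO.trans (g := τ) (IsBigO.of_bound C ?_) O1
    filter_upwards [hτ] with x hx
    rw [Real.norm_of_nonneg hx.1.le]
    exact hx.2.2.2.2.1
  · refine IsBigO.trans (g := fun x => τ x ^ 2) (IsBigO.of_bound C ?_) (O1.pow 2)
    filter_upwards [hτ] with x hx
    rw [norm_pow, Real.norm_of_nonneg hx.1.le]
    exact hx.2.2.2.2.2.1
  · have Os : (fun x => τ x - 2 * lieIter f h 1 x / lieIter f h 2 x) =O[l] lieIter f h 1 := by
      refine O1.sub ?_
      refine ((Oinv.mul (isBigO_refl (lieIter f h 1) l)).const_mul_left 2).congr (fun x => ?_) (fun x => ?_)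
      · rw [div_eq_mul_inv]; ring
      · ring
    have Op := (Ob.mul (O2.mul Os)).const_mul_left (1/6)
    have := (Oe1.add (Oe0.const_mul_left 2)).add (Op.congr_right (g₂ := fun x => lieIter f h 1 x ^ 3) fun x => by ring)
    refine this.congr' ?_ .rfl
    filter_upwards [hane] with x hx
    field_simp
    ring

/-- Return-map asymptotics for one revolution of a crossing orbit around an
invisible–invisible tangency point of a second-order Filippov system: the orbit follows
`f^R` through `{H > 0}`, returns to `{H = 0}`, then follows `f^L` through `{H < 0}` and
returns again, with total time `τ`, return point `P`, and return value of `V = 𝓛_{f^L}H`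
satisfying the stated estimates in `ν = V(x)`, where
`Λ(x) = 𝓛³_{f^L}H(x)/(𝓛²_{f^L}H(x))² − 𝓛³_{f^R}H(x)/(𝓛²_{f^R}H(x))²`. -/
theorem crossing_return_map_asymptotics {n : ℕ}
    (fL fR : EuclideanSpace ℝ (Fin n) → EuclideanSpace ℝ (Fin n))
    (H : EuclideanSpace ℝ (Fin n) → ℝ) (α : EuclideanSpace ℝ (Fin n) → ℝ)
    (hfL : ContDiff ℝ 3 fL) (hfR : ContDiff ℝ 3 fR) (hH : ContDiff ℝ 4 H)
    (hα : ContDiff ℝ 2 α)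
    (hso : ∀ x, lieIter fL H 1 x - lieIter fR H 1 x = α x * H x)
    (φL φR : ℝ → EuclideanSpace ℝ (Fin n) → EuclideanSpace ℝ (Fin n))
    (hφL0 : ∀ x, φL 0 x = x) (hφR0 : ∀ x, φR 0 x = x)
    (hφL : ∀ t x, HasDerivAt (fun s => φL s x) (fL (φL t x)) t)
    (hφR : ∀ t x, HasDerivAt (fun s => φR s x) (fR (φR t x)) t)
    (x₀ : EuclideanSpace ℝ (Fin n)) (hHx₀ : H x₀ = 0) (hVx₀ : lieIter fL H 1 x₀ = 0)
    (hinvL : 0 < lieIter fL H 2 x₀) (hinvR : lieIter fR H 2 x₀ < 0) :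
    ∃ δ > (0:ℝ), ∃ K > (0:ℝ), ∀ x : EuclideanSpace ℝ (Fin n), H x = 0 → ‖x - x₀‖ < δ →
      0 < lieIter fL H 1 x →
      ∃ τR > (0:ℝ), ∃ τL > (0:ℝ),
        H (φR τR x) = 0 ∧
        (∀ t ∈ Set.Ioo (0:ℝ) τR, 0 < H (φR t x)) ∧
        H (φL τL (φR τR x)) = 0 ∧
        (∀ t ∈ Set.Ioo (0:ℝ) τL, H (φL t (φR τR x)) < 0) ∧
        |(τR + τL) - 2 * (1 / lieIter fL H 2 x - 1 / lieIter fR H 2 x) * lieIter fL H 1 x|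
          ≤ K * (lieIter fL H 1 x) ^ 2 ∧
        ‖φL τL (φR τR x) - x -
            ((2 * lieIter fL H 1 x / lieIter fL H 2 x) • fL x -
              (2 * lieIter fL H 1 x / lieIter fR H 2 x) • fR x)‖
          ≤ K * (lieIter fL H 1 x) ^ 2 ∧
        |lieIter fL H 1 (φL τL (φR τR x)) - lieIter fL H 1 x -
            (2 * (lieIter fL H 3 x / (lieIter fL H 2 x) ^ 2 -
              lieIter fR H 3 x / (lieIter fR H 2 x) ^ 2) / 3) * (lieIter fL H 1 x) ^ 2|
          ≤ K * (lieIter fL H 1 x) ^ 3 := by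
  classical
  have cL0 : ContDiff ℝ ((3 + 1 : ℕ) : WithTop ℕ∞) (lieIter fL H 0) := by exact_mod_cast hH
  have cL1 : ContDiff ℝ ((2 + 1 : ℕ) : WithTop ℕ∞) (lieIter fL H 1) := lieIter_succ_contDiff hfL (by norm_num) cL0
  have cL2 : ContDiff ℝ ((1 + 1 : ℕ) : WithTop ℕ∞) (lieIter fL H 2) := lieIter_succ_contDiff hfL (by norm_num) cL1
  have cL3 : ContDiff ℝ ((1 : ℕ) : WithTop ℕ∞) (lieIter fL H 3) := lieIter_succ_contDiff hfL (by norm_num) cL2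
  have cR0 : ContDiff ℝ ((3 + 1 : ℕ) : WithTop ℕ∞) (lieIter fR H 0) := by exact_mod_cast hH
  have cR1 : ContDiff ℝ ((2 + 1 : ℕ) : WithTop ℕ∞) (lieIter fR H 1) := lieIter_succ_contDiff hfR (by norm_num) cR0
  have cR2 : ContDiff ℝ ((1 + 1 : ℕ) : WithTop ℕ∞) (lieIter fR H 2) := lieIter_succ_contDiff hfR (by norm_num) cR1
  have cR3 : ContDiff ℝ ((1 : ℕ) : WithTop ℕ∞) (lieIter fR H 3) := lieIter_succ_contDiff hfR (by norm_num) cR2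
  have hVV : ∀ x, H x = 0 → lieIter fR H 1 x = lieIter fL H 1 x := by
    intro x hx
    have := hso x
    rw [hx, mul_zero] at this
    linarith
  have hneg : ∀ m, lieIter fL (fun y => - H y) m = fun x => - lieIter fL H m x :=
    fun m => funext (lieIter_neg fL H m)
  obtain ⟨τR, evR, R1, R2, R3, R4, R5⟩ := half_map hfR hH hφR0 hφR x₀ ((hVV x₀ hHx₀).trans hVx₀) hinvR
  obtain ⟨τL, evL, L1, L2, -, L4, L5⟩ := half_map (h := fun y => - H y) hfL hH.neg hφL0 hφL x₀
    (by simp [hneg, hVx₀]) (by simp [hneg, hinvL])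
  set l := 𝓝[sect fR H] x₀ with hl
  set l' := 𝓝[sect fL (fun y => - H y)] x₀ with hl'
  have hle : l ≤ 𝓝 x₀ := nhdsWithin_le_nhds
  simp only [hneg] at L1 L2 L4 L5
  have hmem : ∀ᶠ x in l, x ∈ sect fR H := self_mem_nhdsWithin
  have hEq : lieIter fR H 1 =ᶠ[l] lieIter fL H 1 := by
    filter_upwards [hmem] with x hx using hVV x hx.1
  have hpos : ∀ᶠ x in l, 0 < lieIter fL H 1 x := by
    filter_upwards [hmem, hEq] with x hx h
    rw [← h]; exact hx.2
  have hE2 : (fun x => lieIter fR H 1 x ^ 2) =ᶠ[l] fun x => lieIter fL H 1 x ^ 2 := hEq.fun_comp (· ^ 2)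
  have hE3 : (fun x => lieIter fR H 1 x ^ 3) =ᶠ[l] fun x => lieIter fL H 1 x ^ 3 := hEq.fun_comp (· ^ 3)
  set z : EuclideanSpace ℝ (Fin n) → EuclideanSpace ℝ (Fin n) := fun x => φR (τR x) x with hz
  set V := lieIter fL H 1 with hV
  set A := lieIter fL H 2 with hA
  set B := lieIter fL H 3 with hB
  set a := lieIter fR H 2 with ha
  set b := lieIter fR H 3 with hb
  -- rephrase the first half with `V`
  have S1 : τR =O[l] V := R1.trans_eventuallyEq hEq
  have S2 : (fun x => τR x + 2 * V x / a x) =O[l] fun x => V x ^ 2 := by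
    refine R2.congr' ?_ hE2
    filter_upwards [hEq] with x hx
    rw [hx]
  have S3 : (fun x => z x - x) =O[l] V := R3.trans_eventuallyEq hEq
  have S4 : (fun x => z x - x - τR x • fR x) =O[l] fun x => V x ^ 2 := R4.trans_eventuallyEq hE2
  have S5 : (fun x => V (z x) + V x - 2 / 3 * (b x / a x ^ 2) * V x ^ 2) =O[l] fun x => V x ^ 3 := by
    refine R5.congr' ?_ hE3
    filter_upwards [hEq, evR] with x hx h'
    rw [hx, hVV _ h'.2.1]
  have hVto : Tendsto V l (𝓝 0) := by
    have := (cL1.continuous.continuousAt (x := x₀)).tendsto.mono_left hle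
    rwa [hVx₀] at this
  have V21 : (fun x => V x ^ 2) =O[l] V :=
    ((hVto.isBigO_one ℝ).mul (isBigO_refl V l)).congr (fun x => by ring) (fun x => by ring)
  have V32 : (fun x => V x ^ 3) =O[l] fun x => V x ^ 2 :=
    ((hVto.isBigO_one ℝ).mul (isBigO_refl (fun x => V x ^ 2) l)).congr (fun x => by ring) (fun x => by ring)
  have hzto : Tendsto z l (𝓝 x₀) := by
    have h1 : Tendsto (fun x => z x - x) l (𝓝 0) := S3.trans_tendsto hVto
    have h2 : Tendsto (fun x => x) l (𝓝 x₀) := hle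
    simpa using h1.add h2
  -- Lipschitz
  have lip : ∀ {F : Type} [NormedAddCommGroup F] [NormedSpace ℝ F]
      (q : EuclideanSpace ℝ (Fin n) → F), ContDiffAt ℝ 1 q x₀ →
      (fun x => q (z x) - q x) =O[l] V := by
    intro F _ _ q hq
    have h1 := (hq.hasStrictFDerivAt one_ne_zero).isBigO_sub
    have h2 : Tendsto (fun x => (z x, x)) l (𝓝 (x₀, x₀)) := hzto.prodMk_nhds hle
    exact (h1.comp_tendsto h2).trans S3
  have cA1 : ContDiffAt ℝ 1 A x₀ := (cL2.of_le (by norm_num)).contDiffAt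
  have cB1 : ContDiffAt ℝ 1 B x₀ := by exact_mod_cast cL3.contDiffAt
  have lipf := lip fL (hfL.of_le (by norm_num)).contDiffAt
  have lipA := lip (fun x => (A x)⁻¹) (cA1.inv hinvL.ne')
  have cq : ContDiffAt ℝ 1 (fun x => B x / A x ^ 2) x₀ :=
    cB1.div (cA1.pow 2) (pow_ne_zero 2 hinvL.ne')
  have lipq := lip _ cq
  have Oqz : (fun x => B (z x) / A (z x) ^ 2) =O[l] fun _ => (1:ℝ) :=
    (cq.continuousAt.tendsto.comp hzto).isBigO_one ℝ
  have OAz : (fun x => (A (z x))⁻¹) =O[l] fun _ => (1:ℝ) :=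
    ((cA1.inv hinvL.ne').continuousAt.tendsto.comp hzto).isBigO_one ℝ
  have OfL : fL =O[l] fun _ => (1:ℝ) :=
    (hfL.continuous.continuousAt.tendsto.mono_left hle).isBigO_one ℝ
  have OfR : fR =O[l] fun _ => (1:ℝ) :=
    (hfR.continuous.continuousAt.tendsto.mono_left hle).isBigO_one ℝ
  have Oq : (fun x => b x / a x ^ 2) =O[l] fun _ => (1:ℝ) :=
    ((cR3.continuous.continuousAt.div (cR2.continuous.continuousAt.pow 2)
      (pow_ne_zero 2 hinvR.ne)).tendsto.mono_left hle).isBigO_one ℝ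
  -- the intermediate value
  have W2 : (fun x => V (z x) + V x) =O[l] fun x => V x ^ 2 := by
    have h1 := (Oq.mul (isBigO_refl (fun x => V x ^ 2) l)).const_mul_left (2/3)
    refine ((S5.trans V32).add (h1.congr_right (g₂ := fun x => V x ^ 2) fun x => by ring)).congr_left fun x => by ring
  have W1 : (fun x => - V (z x)) =O[l] V :=
    ((isBigO_refl V l).sub (W2.trans V21)).congr_left fun x => by ring
  have hWpos : ∀ᶠ x in l, 0 < - V (z x) := by
    obtain ⟨C, hC, hCb⟩ := W2.exists_pos
    have h1 : ∀ᶠ x in l, V x < 1 / C := hVto.eventually (gt_mem_nhds (by positivity))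
    filter_upwards [hCb.bound, h1, hpos] with x h2 h3 h4
    rw [Real.norm_eq_abs, Real.norm_of_nonneg (by positivity)] at h2
    have h5 := (abs_le.1 h2).2
    rw [lt_div_iff₀ hC] at h3
    nlinarith
  have hzl : Tendsto z l l' := by
    refine tendsto_nhdsWithin_iff.2 ⟨hzto, ?_⟩
    filter_upwards [hWpos, evR] with x h1 h2
    refine ⟨by simpa using h2.2.1, ?_⟩
    rw [hneg]; exact h1
  have M1 : (fun x => τL (z x)) =O[l] V := (L1.comp_tendsto hzl).trans W1
  have M2 : (fun x => τL (z x) + 2 * (- V (z x)) / (- A (z x))) =O[l] fun x => V x ^ 2 :=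
    (L2.comp_tendsto hzl).trans (W1.pow 2)
  have M4 : (fun x => φL (τL (z x)) (z x) - z x - τL (z x) • fL (z x)) =O[l] fun x => V x ^ 2 :=
    (L4.comp_tendsto hzl).trans (W1.pow 2)
  have M5 : (fun x => - V (φL (τL (z x)) (z x)) + - V (z x)
      - 2 / 3 * (- B (z x) / (- A (z x)) ^ 2) * (- V (z x)) ^ 2) =O[l] fun x => V x ^ 3 :=
    (L5.comp_tendsto hzl).trans (W1.pow 3)
  have N2 : (fun x => τL (z x) - 2 * V x / A x) =O[l] fun x => V x ^ 2 := by
    have h1 := (OAz.mul W2).const_mul_left 2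
    have h2 := (lipA.mul (isBigO_refl V l)).const_mul_left 2
    refine ((M2.sub (h1.congr_right (g₂ := fun x => V x ^ 2) fun x => by ring)).add
      (h2.congr_right (g₂ := fun x => V x ^ 2) fun x => by ring)).congr_left fun x => ?_
    simp only [div_eq_mul_inv, inv_neg]
    ring
  have G1 : (fun x => (τR x + τL (z x)) - 2 * (1 / A x - 1 / a x) * V x) =O[l] fun x => V x ^ 2 := by
    refine (S2.add N2).congr_left fun x => ?_
    simp only [div_eq_mul_inv]
    ring
  have G2 : (fun x => φL (τL (z x)) (z x) - x - ((2 * V x / A x) • fL x - (2 * V x / a x) • fR x))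
      =O[l] fun x => V x ^ 2 := by
    have h1 := (M1.smul lipf).congr_right (g₂ := fun x => V x ^ 2) fun x => by simp [sq]
    have h2 := (N2.smul OfL).congr_right (g₂ := fun x => V x ^ 2) fun x => by simp
    have h3 := (S2.smul OfR).congr_right (g₂ := fun x => V x ^ 2) fun x => by simp
    refine ((((M4.add h1).add h2).add S4).add h3).congr_left fun x => ?_
    module
  have G3 : (fun x => V (φL (τL (z x)) (z x)) - V x
      - (2 * (B x / A x ^ 2 - b x / a x ^ 2) / 3) * V x ^ 2) =O[l] fun x => V x ^ 3 := by
    have W3 : (fun x => V (z x) ^ 2 - V x ^ 2) =O[l] fun x => V x ^ 3 := by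
      have h0 : (fun x => V (z x) - V x) =O[l] V :=
        (W1.neg_left.sub (isBigO_refl V l)).congr_left fun x => by ring
      exact (W2.mul h0).congr (fun x => by ring) (fun x => by ring)
    have h1 := ((Oqz.mul W3).congr_right (g₂ := fun x => V x ^ 3) fun x => by ring).const_mul_left (2/3)
    have h2 := ((lipq.mul (isBigO_refl (fun x => V x ^ 2) l)).congr_right
      (g₂ := fun x => V x ^ 3) fun x => by ring).const_mul_left (2/3)
    refine (((M5.neg_left.sub S5).add h1).add h2).congr_left fun x => ?_
    simp only [div_eq_mul_inv, neg_sq]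
    ring
  obtain ⟨K1, hK1, B1⟩ := G1.exists_pos
  obtain ⟨K2, hK2, B2⟩ := G2.exists_pos
  obtain ⟨K3, hK3, B3⟩ := G3.exists_pos
  have hall := (((evR.and (hzl.eventually evL)).and B1.bound).and B2.bound).and B3.bound
  rw [hl, eventually_nhdsWithin_iff] at hall
  obtain ⟨δ, hδ, hball⟩ := Metric.eventually_nhds_iff.1 hall
  refine ⟨δ, hδ, K1 + K2 + K3, by positivity, ?_⟩
  intro x hx0 hxδ hxp
  obtain ⟨⟨⟨⟨⟨e1, e2, e3⟩, e4, e5, e6⟩, e7⟩, e8⟩, e9⟩ :=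
    hball (by rwa [dist_eq_norm]) ⟨hx0, by rw [hVV x hx0]; exact hxp⟩
  refine ⟨τR x, e1, τL (z x), e4, e2, e3, by simpa using e5, fun t ht => by simpa using e6 t ht, ?_, ?_, ?_⟩
  · rw [Real.norm_eq_abs, Real.norm_of_nonneg (by positivity)] at e7
    exact e7.trans (by gcongr; linarith)
  · rw [Real.norm_of_nonneg (by positivity)] at e8
    exact e8.trans (by gcongr; linarith)
  · rw [Real.norm_eq_abs, Real.norm_of_nonneg (by positivity)] at e9
    exact e9.trans (by gcongr; linarith)
end

section
/- Let β₀ > 0, M₁ > 0, M₃ ≥ M₁/β₀, K₁ > 0 and d ≥ 0 be real constants. Let (t_j)_{j≥0}, (V_j)_{j≥0}, (E_j)_{j≥0} be sequences of real numbers with t₀ = 0, t_{j+1} > t_j, V_j > 0 and E_j ≥ 0 for all j, satisfying for all j ≥ 0: t_{j+1} − t_j ≥ β₀ V_j, V_{j+1} ≤ V_j + M₁ V_j², and E_{j+1} ≤ (1 + M₃(t_{j+1} − t_j)) E_j + K₁ V_j², and with initial bounds V₀ ≤ M₁ d and E₀ = d. Then for all j ≥ 0: V_j ≤ M₁ e^{M₁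 t_j / β₀} d and E_j ≤ (1 + K₁ M₁ t_j / β₀) e^{M₃ t_j} d. (This discrete Grönwall-type induction shows that the error between a spiralling crossing orbit and the second-order sliding orbit admits a bound that is linear in the initial separation d, uniformly over any bounded time interval.) -/
/-- Discrete Grönwall-type induction for the consistency theorem: under the one-revolution
estimates `t_{j+1} − t_j ≥ β₀V_j`, `V_{j+1} ≤ V_j + M₁V_j²`,
`E_{j+1} ≤ (1 + M₃(t_{j+1} − t_j))E_j + K₁V_j²`, with `V₀ ≤ M₁d` and `E₀ = d`,
one has `V_j ≤ M₁ e^{M₁t_j/β₀} d` and `E_j ≤ (1 + K₁M₁t_j/β₀) e^{M₃t_j} d` for all `j`. -/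
theorem discrete_gronwall_consistency (β₀ M₁ M₃ K₁ d : ℝ)
    (hβ₀ : 0 < β₀) (hM₁ : 0 < M₁) (hM₃ : M₁ / β₀ ≤ M₃) (hK₁ : 0 < K₁) (hd : 0 ≤ d)
    (t V E : ℕ → ℝ)
    (ht0 : t 0 = 0) (htmono : ∀ j, t j < t (j + 1))
    (hVpos : ∀ j, 0 < V j) (hEnonneg : ∀ j, 0 ≤ E j)
    (h1 : ∀ j, β₀ * V j ≤ t (j + 1) - t j)
    (h2 : ∀ j, V (j + 1) ≤ V j + M₁ * V j ^ 2)
    (h3 : ∀ j, E (j + 1) ≤ (1 + M₃ * (t (j + 1) - t j)) * E j + K₁ * V j ^ 2)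
    (hV0 : V 0 ≤ M₁ * d) (hE0 : E 0 = d) :
    ∀ j : ℕ, V j ≤ M₁ * Real.exp (M₁ * t j / β₀) * d ∧
      E j ≤ (1 + K₁ * M₁ * t j / β₀) * Real.exp (M₃ * t j) * d := by
  have hM₃pos : 0 < M₃ := lt_of_lt_of_le (div_pos hM₁ hβ₀) hM₃
  have htn : ∀ j, 0 ≤ t j := by
    intro j
    induction j with
    | zero => exact ht0.ge
    | succ k ih => exact ih.trans (htmono k).le
  intro j
  induction j with
  | zero => simp [ht0, hV0, hE0]
  | succ k ih =>
    obtain ⟨ihV, ihE⟩ := ih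
    have hVk := hVpos k
    have hVD : V k ≤ (t (k + 1) - t k) / β₀ := by
      rw [le_div_iff₀ hβ₀]
      linarith [h1 k]
    have hD : 0 ≤ t (k + 1) - t k := sub_nonneg.2 (htmono k).le
    constructor
    · have e1 : 1 + M₁ * V k ≤ Real.exp (M₁ * ((t (k + 1) - t k) / β₀)) := by
        have a1 := Real.add_one_le_exp (M₁ * ((t (k + 1) - t k) / β₀))
        have a2 := mul_le_mul_of_nonneg_left hVD hM₁.le
        linarith
      have e2 : Real.exp (M₁ * t (k + 1) / β₀) =
          Real.exp (M₁ * t k / β₀) * Real.exp (M₁ * ((t (k + 1) - t k) / β₀)) := by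
        rw [← Real.exp_add]
        congr 1
        ring
      calc V (k + 1) ≤ V k * (1 + M₁ * V k) := by linarith [h2 k]
        _ ≤ (M₁ * Real.exp (M₁ * t k / β₀) * d) *
            Real.exp (M₁ * ((t (k + 1) - t k) / β₀)) :=
          mul_le_mul ihV e1 (by positivity) (by positivity)
        _ = _ := by rw [e2]; ring
    · have e1 : 1 + M₃ * (t (k + 1) - t k) ≤ Real.exp (M₃ * (t (k + 1) - t k)) := by
        linarith [Real.add_one_le_exp (M₃ * (t (k + 1) - t k))]
      have e2 : Real.exp (M₃ * t (k + 1)) =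
          Real.exp (M₃ * (t (k + 1) - t k)) * Real.exp (M₃ * t k) := by
        rw [← Real.exp_add]
        congr 1
        ring
      have e3 : Real.exp (M₁ * t k / β₀) ≤ Real.exp (M₃ * t (k + 1)) := by
        apply Real.exp_le_exp.2
        calc M₁ * t k / β₀ = M₁ / β₀ * t k := by ring
          _ ≤ M₃ * t (k + 1) := mul_le_mul hM₃ (htmono k).le (htn k) hM₃pos.le
      have hV' : V k ≤ M₁ * Real.exp (M₃ * t (k + 1)) * d := by
        refine ihV.trans ?_
        gcongr
      have hV2 : V k * V k ≤ (t (k + 1) - t k) / β₀ * (M₁ * Real.exp (M₃ * t (k + 1)) * d) :=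
        mul_le_mul hVD hV' hVk.le (by positivity)
      have hA : (1 + M₃ * (t (k + 1) - t k)) * E k ≤
          Real.exp (M₃ * (t (k + 1) - t k)) *
            ((1 + K₁ * M₁ * t k / β₀) * Real.exp (M₃ * t k) * d) :=
        mul_le_mul e1 ihE (hEnonneg k) (by positivity)
      calc E (k + 1) ≤ (1 + M₃ * (t (k + 1) - t k)) * E k + K₁ * (V k * V k) := by
            linarith [h3 k]
        _ ≤ Real.exp (M₃ * (t (k + 1) - t k)) *
            ((1 + K₁ * M₁ * t k / β₀) * Real.exp (M₃ * t k) * d) +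
            K₁ * ((t (k + 1) - t k) / β₀ * (M₁ * Real.exp (M₃ * t (k + 1)) * d)) :=
          add_le_add hA (mul_le_mul_of_nonneg_left hV2 hK₁.le)
        _ = _ := by rw [e2]; ring
end

section
/- Let f^L, f^R : ℝⁿ → ℝⁿ be C¹, H : ℝⁿ → ℝ be C², and suppose there is a C¹ function α : ℝⁿ → ℝ with 𝓛_{f^L}H(x) − 𝓛_{f^R}H(x) = α(x)·H(x) for all x (so the system is second-order). Write V = 𝓛_{f^L}H and define η : ℝⁿ → ℝ², η(x) = (H(x), V(x)). Let x be a point with H(x) = 0 and V(x) = 0 (i.e. x lies on the tangency surface 𝒯), and write a = 𝓛²_{f^L}H(x), b = 𝓛²_{f^R}H(x). Assume a·b < 0 (x belongs to a visible–visible or invisible–invisible region). Define λ* = (‖dη(x)[f^R(x)]‖ − ‖dη(x)[f^L(x)]‖)/(‖dη(x)[f^R(x)]‖ + ‖dη(x)[f^L(x)]‖) and the tangential sliding vector field f^tan(x) = ((1−λ*)/2)·f^R(x) + ((1+λ*)/2)·f^L(x). Then f^tan(x) = f^T(x), where f^T(x) = (f^R(x)·a − f^L(x)·b)/(a − b) is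 the second-order sliding vector field. -/
/-- At a visible–visible or invisible–invisible tangency point of a second-order Filippov
system, the tangential sliding vector field of Carvalho et al. (defined via `λ*` with the
Euclidean norm of `dη(x)` applied to the two vector fields, where `η = (H, V)`) coincides
with the second-order sliding vector field `f^T(x) = (a·f^R(x) − b·f^L(x))/(a − b)`. -/
theorem tangential_sliding_eq_second_order_sliding {n : ℕ}
    (fL fR : EuclideanSpace ℝ (Fin n) → EuclideanSpace ℝ (Fin n))
    (H : EuclideanSpace ℝ (Fin n) → ℝ) (α : EuclideanSpace ℝ (Fin n) → ℝ)
    (hfL : ContDiff ℝ 1 fL) (hfR : ContDiff ℝ 1 fR) (hH : ContDiff ℝ 2 H)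
    (hα : ContDiff ℝ 1 α)
    (hso : ∀ x, lieIter fL H 1 x - lieIter fR H 1 x = α x * H x)
    (x : EuclideanSpace ℝ (Fin n)) (hHx : H x = 0) (hVx : lieIter fL H 1 x = 0)
    (a b : ℝ) (ha : a = lieIter fL H 2 x) (hb : b = lieIter fR H 2 x)
    (hab : a * b < 0)
    (η : EuclideanSpace ℝ (Fin n) → EuclideanSpace ℝ (Fin 2))
    (hη : ∀ y, η y = (WithLp.equiv 2 (Fin 2 → ℝ)).symm ![H y, lieIter fL H 1 y])
    (lam : ℝ)
    (hlam : lam = (‖fderiv ℝ η x (fR x)‖ - ‖fderiv ℝ η x (fL x)‖) /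
      (‖fderiv ℝ η x (fR x)‖ + ‖fderiv ℝ η x (fL x)‖)) :
    ((1 - lam) / 2) • fR x + ((1 + lam) / 2) • fL x
      = (a - b)⁻¹ • (a • fR x - b • fL x) := by
  have hHd : Differentiable ℝ H := hH.differentiable (by norm_num)
  have hVC : ContDiff ℝ 1 (lieIter fL H 1) := by
    have h1 : ContDiff ℝ 1 (fderiv ℝ H) := hH.fderiv_right (by norm_num)
    exact h1.clm_apply hfL
  have hVd : Differentiable ℝ (lieIter fL H 1) := hVC.differentiable (by norm_num)
  have hαd : Differentiable ℝ α := hα.differentiable (by norm_num)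
  have hL0 : fderiv ℝ H x (fL x) = 0 := hVx
  have hR0 : fderiv ℝ H x (fR x) = 0 := by
    have h := hso x
    rw [hVx, hHx] at h
    have h' : lieIter fR H 1 x = 0 := by linarith
    exact h'
  have ha' : fderiv ℝ (lieIter fL H 1) x (fL x) = a := ha.symm
  have hb' : fderiv ℝ (lieIter fL H 1) x (fR x) = b := by
    have hfun : lieIter fR H 1 = fun y => lieIter fL H 1 y - α y * H y := by
      funext y
      linarith [hso y]
    have hb2 : b = fderiv ℝ (lieIter fR H 1) x (fR x) := hb
    have hd : HasFDerivAt (fun y => lieIter fL H 1 y - α y * H y)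
        (fderiv ℝ (lieIter fL H 1) x - (α x • fderiv ℝ H x + H x • fderiv ℝ α x)) x :=
      (hVd x).hasFDerivAt.sub ((hαd x).hasFDerivAt.mul (hHd x).hasFDerivAt)
    rw [hfun, hd.fderiv] at hb2
    simp [hHx, hR0] at hb2
    exact hb2.symm
  have hηd : DifferentiableAt ℝ η x := by
    rw [differentiableAt_euclidean]
    intro i
    fin_cases i
    · simpa [hη] using hHd x
    · simpa [hη] using hVd x
  have hcomp : ∀ (i : Fin 2) (v : EuclideanSpace ℝ (Fin n)),
      (fderiv ℝ η x v) i = fderiv ℝ (fun y => η y i) x v := by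
    intro i v
    have h := ((EuclideanSpace.proj i : EuclideanSpace ℝ (Fin 2) →L[ℝ] ℝ).hasFDerivAt (x := η x)).comp x hηd.hasFDerivAt
    have h2 : fderiv ℝ (fun y => η y i) x = _ := h.fderiv
    rw [h2]
    rfl
  have hnorm : ∀ v : EuclideanSpace ℝ (Fin n), fderiv ℝ H x v = 0 →
      ‖fderiv ℝ η x v‖ = |fderiv ℝ (lieIter fL H 1) x v| := by
    intro v hv
    have h0 : (fderiv ℝ η x v) 0 = 0 := by
      rw [hcomp]
      simpa [hη] using hv
    have h1 : (fderiv ℝ η x v) 1 = fderiv ℝ (lieIter fL H 1) x v := by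
      rw [hcomp]
      simp [hη]
    rw [EuclideanSpace.norm_eq, Fin.sum_univ_two, h0, h1]
    simp [Real.sqrt_sq_eq_abs]
  rw [hnorm _ hL0, hnorm _ hR0, ha', hb'] at hlam
  have hne : a - b ≠ 0 := by
    intro h
    have : a = b := by linarith
    subst this
    nlinarith [mul_self_nonneg a]
  have hl : lam = -(a + b) / (a - b) := by
    rcases mul_neg_iff.1 hab with ⟨h1, h2⟩ | ⟨h1, h2⟩
    · rw [hlam, abs_of_pos h1, abs_of_neg h2]
      congr 1 <;> ring
    · rw [hlam, abs_of_neg h1, abs_of_pos h2, ← neg_div_neg_eq]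
      congr 1 <;> ring
  have e1 : (1 - lam) / 2 = (a - b)⁻¹ * a := by
    rw [hl]; field_simp; ring
  have e2 : (1 + lam) / 2 = -((a - b)⁻¹ * b) := by
    rw [hl]; field_simp; ring
  rw [e1, e2, smul_sub, smul_smul, smul_smul, neg_smul, ← sub_eq_add_neg]
end

section
/- Let f : ℝⁿ → ℝⁿ be C³ and H : ℝⁿ → ℝ be C⁴. Let φ : ℝ × ℝⁿ → ℝⁿ be a global flow of f, i.e. φ(0,x) = x and ∂_t φ(t,x) = f(φ(t,x)) for all t, x. Let x₀ satisfy H(x₀) = 0, 𝓛_f H(x₀) = 0 and 𝓛²_f H(x₀) < 0. Then there exist δ > 0 and K > 0 such that for every x with H(x) = 0, ‖x − x₀‖ < δ and ν := 𝓛_f H(x) > 0, there exists τ > 0 with: H(φ(τ,x)) = 0; H(φ(t,x)) > 0 for all t ∈ (0, τ); and the estimates |τ + 2ν/𝓛²_f H(x)| ≤ K ν², ‖φ(τ,x) − x + (2ν/𝓛²_f H(x))·f(x)‖ ≤ K ν², and |𝓛_f H(φ(τ,x)) + ν − (2𝓛³_f H(x)/(3(𝓛²_f H(x))²))·ν²|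 ≤ K ν³. -/
theorem aux_integrate {E : Type*} [NormedAddCommGroup E] [NormedSpace ℝ E]
    (g g' : ℝ → E) (T C : ℝ) (k : ℕ) (hg : ∀ t, HasDerivAt g (g' t) t) (h0 : g 0 = 0)
    (hb : ∀ t ∈ Set.Icc (0:ℝ) T, ‖g' t‖ ≤ C * t ^ k) :
    ∀ t ∈ Set.Icc (0:ℝ) T, ‖g t‖ ≤ C * t ^ (k + 1) / (k + 1) := by
  intro t ht
  refine image_norm_le_of_norm_deriv_right_le_deriv_boundary (a := 0) (b := T) (f := g) (f' := g')
    (B := fun t => C * t ^ (k + 1) / (k + 1)) (B' := fun t => C * t ^ k)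
    (fun t _ => (hg t).continuousAt.continuousWithinAt)
    (fun t _ => (hg t).hasDerivWithinAt) (by simp [h0]) ?_
    (fun t ht => hb t ⟨ht.1, ht.2.le⟩) ht
  intro t
  have h := ((hasDerivAt_pow (k+1) t).const_mul C).div_const ((k:ℝ) + 1)
  refine h.congr_deriv ?_
  have : (k:ℝ) + 1 ≠ 0 := by positivity
  push_cast
  field_simp

theorem aux_core (c M T : ℝ) (hc : 0 < c) (hM : 1 ≤ M) (hT : 0 < T) :
    ∃ K > (0:ℝ), ∃ ε > (0:ℝ), ∀ u0 u1 u2 u3 u4 : ℝ → ℝ,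
      (∀ t, HasDerivAt u0 (u1 t) t) → (∀ t, HasDerivAt u1 (u2 t) t) →
      (∀ t, HasDerivAt u2 (u3 t) t) → (∀ t, HasDerivAt u3 (u4 t) t) →
      (∀ t ∈ Set.Icc (0:ℝ) T, u2 t ≤ -c) → (∀ t ∈ Set.Icc (0:ℝ) T, |u2 t| ≤ M) →
      (∀ t ∈ Set.Icc (0:ℝ) T, |u3 t| ≤ M) → (∀ t ∈ Set.Icc (0:ℝ) T, |u4 t| ≤ M) →
      u0 0 = 0 → 0 < u1 0 → u1 0 < ε →
      ∃ τ > (0:ℝ), τ ≤ T ∧ τ ≤ 4 / c * u1 0 ∧ u0 τ = 0 ∧ (∀ t ∈ Set.Ioo (0:ℝ) τ, 0 < u0 t) ∧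
        |τ + 2 * u1 0 / u2 0| ≤ K * u1 0 ^ 2 ∧
        |u1 τ + u1 0 - (2 * u3 0 / (3 * u2 0 ^ 2)) * u1 0 ^ 2| ≤ K * u1 0 ^ 3 := by
  have hM0 : 0 < M := by linarith
  obtain ⟨q, hq⟩ : ∃ q, q = 4 / c := ⟨_, rfl⟩
  have hq0 : 0 < q := by rw [hq]; positivity
  have hqc : q * c = 4 := by rw [hq]; field_simp
  obtain ⟨K1, hK1⟩ : ∃ K1, K1 = M * (1 + T) * q ^ 2 / c := ⟨_, rfl⟩
  have hK10 : 0 < K1 := by rw [hK1]; positivity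
  have hK1c : K1 * c = M * (1 + T) * q ^ 2 := by rw [hK1]; field_simp
  obtain ⟨K2, hK2⟩ : ∃ K2, K2 = M * K1 * q + M * q ^ 3 := ⟨_, rfl⟩
  have hK20 : 0 < K2 := by rw [hK2]; positivity
  refine ⟨K1 + K2, by positivity, min 1 (min (T / q) (1 / (M * q ^ 2))), by positivity, ?_⟩
  intro u0 u1 u2 u3 u4 h0 h1 h2 h3 hneg hb2 hb3 hb4 hu0 hν hνε
  obtain ⟨ν, hνd⟩ : ∃ ν, ν = u1 0 := ⟨_, rfl⟩
  obtain ⟨b, hbd⟩ : ∃ b, b = u2 0 := ⟨_, rfl⟩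
  obtain ⟨d, hdd⟩ : ∃ d, d = u3 0 := ⟨_, rfl⟩
  rw [← hνd] at hν hνε
  rw [← hνd, ← hbd, ← hdd, ← hq]
  have hν1 : ν < 1 := lt_of_lt_of_le hνε (min_le_left _ _)
  have hνT : q * ν < T := by
    have := lt_of_lt_of_le hνε ((min_le_right _ _).trans (min_le_left _ _))
    rw [lt_div_iff₀ hq0] at this; linarith
  have hνM : ν * (M * q ^ 2) < 1 := by
    have := lt_of_lt_of_le hνε ((min_le_right _ _).trans (min_le_right _ _))
    rwa [lt_div_iff₀ (by positivity)] at this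
  have h00 : (0:ℝ) ∈ Set.Icc (0:ℝ) T := ⟨le_rfl, hT.le⟩
  have hbc : b ≤ -c := hbd ▸ hneg 0 h00
  have hbM : |b| ≤ M := hbd ▸ hb2 0 h00
  have hdM : |d| ≤ M := hdd ▸ hb3 0 h00
  -- Taylor
  have a3 : ∀ t ∈ Set.Icc (0:ℝ) T, ‖u3 t - d‖ ≤ M * t := by
    intro t ht
    have := aux_integrate (fun t => u3 t - d) u4 T M 0 (fun t => (h3 t).sub_const d)
      (by simp [hdd]) (by simpa using hb4) t ht
    simpa using this
  have a2 : ∀ t ∈ Set.Icc (0:ℝ) T, ‖u2 t - b - d * t‖ ≤ M * t ^ 2 / 2 := by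
    intro t ht
    have := aux_integrate (fun t => u2 t - b - d * t) (fun t => u3 t - d) T M 1
      (fun t => by simpa using ((h2 t).sub_const b).fun_sub ((hasDerivAt_id' t).const_mul d))
      (by simp [hbd]) (by simpa using a3) t ht
    norm_num at this ⊢
    exact this
  have a1 : ∀ t ∈ Set.Icc (0:ℝ) T, ‖u1 t - ν - b * t - d * t ^ 2 / 2‖ ≤ M * t ^ 3 / 6 := by
    intro t ht
    have := aux_integrate (fun t => u1 t - ν - b * t - d * t ^ 2 / 2)
      (fun t => u2 t - b - d * t) T (M / 2) 2
      (fun t => by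
        have := (((h1 t).sub_const ν).fun_sub ((hasDerivAt_id' t).const_mul b)).fun_sub
          (((hasDerivAt_pow 2 t).const_mul d).div_const 2)
        exact this.congr_deriv (by norm_num; try ring))
      (by simp [hνd]) (fun t ht => (a2 t ht).trans (by linarith)) t ht
    refine this.trans (le_of_eq ?_)
    norm_num; ring
  have a0 : ∀ t ∈ Set.Icc (0:ℝ) T,
      ‖u0 t - ν * t - b * t ^ 2 / 2 - d * t ^ 3 / 6‖ ≤ M * t ^ 4 / 24 := by
    intro t ht
    have := aux_integrate (fun t => u0 t - ν * t - b * t ^ 2 / 2 - d * t ^ 3 / 6)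
      (fun t => u1 t - ν - b * t - d * t ^ 2 / 2) T (M / 6) 3
      (fun t => by
        have := (((h0 t).fun_sub ((hasDerivAt_id' t).const_mul ν)).fun_sub
          (((hasDerivAt_pow 2 t).const_mul b).div_const 2)).fun_sub
          (((hasDerivAt_pow 3 t).const_mul d).div_const 6)
        exact this.congr_deriv (by norm_num; try ring))
      (by simp [hu0]) (fun t ht => (a1 t ht).trans (by linarith)) t ht
    refine this.trans (le_of_eq ?_)
    norm_num; ring
  -- lower order Taylor for `u0`
  have c2 : ∀ t ∈ Set.Icc (0:ℝ) T, ‖u2 t - b‖ ≤ M * t := by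
    intro t ht
    have := aux_integrate (fun t => u2 t - b) u3 T M 0 (fun t => (h2 t).sub_const b)
      (by simp [hbd]) (by simpa using hb3) t ht
    simpa using this
  have c1 : ∀ t ∈ Set.Icc (0:ℝ) T, ‖u1 t - ν - b * t‖ ≤ M * t ^ 2 / 2 := by
    intro t ht
    have := aux_integrate (fun t => u1 t - ν - b * t) (fun t => u2 t - b) T M 1
      (fun t => by simpa using ((h1 t).sub_const ν).fun_sub ((hasDerivAt_id' t).const_mul b))
      (by simp [hνd]) (by simpa using c2) t ht
    norm_num at this ⊢
    exact this
  have c0 : ∀ t ∈ Set.Icc (0:ℝ) T, ‖u0 t - ν * t - b * t ^ 2 / 2‖ ≤ M * t ^ 3 / 6 := by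
    intro t ht
    have := aux_integrate (fun t => u0 t - ν * t - b * t ^ 2 / 2)
      (fun t => u1 t - ν - b * t) T (M / 2) 2
      (fun t => by
        have := ((h0 t).fun_sub ((hasDerivAt_id' t).const_mul ν)).fun_sub
          (((hasDerivAt_pow 2 t).const_mul b).div_const 2)
        exact this.congr_deriv (by norm_num; try ring))
      (by simp [hu0]) (fun t ht => (c1 t ht).trans (by linarith)) t ht
    refine this.trans (le_of_eq ?_)
    norm_num; ring
  -- existence
  have hcM : c ≤ M := by have := (abs_le.1 hbM).1; linarith
  have hqM : 1 ≤ q * M := by nlinarith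
  obtain ⟨s, hs⟩ : ∃ s, s = ν / M := ⟨_, rfl⟩
  have hs0 : 0 < s := by rw [hs]; positivity
  have hsM : s * M = ν := by rw [hs]; field_simp
  have hsq : s ≤ q * ν := by rw [← hsM]; nlinarith
  have hs1 : s < 1 := by nlinarith
  have hlo : 0 ≤ u0 s := by
    have h := (abs_le.1 (c0 s ⟨hs0.le, by linarith⟩)).1
    have hb := (abs_le.1 hbM).1
    have e1 : 0 ≤ (b + M) * s ^ 2 := mul_nonneg (by linarith) (by positivity)
    have e2 : ν * s = M * s ^ 2 := by rw [← hsM]; ring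
    have e3 : M * s ^ 3 ≤ M * s ^ 2 := by
      apply mul_le_mul_of_nonneg_left _ hM0.le
      nlinarith [sq_nonneg s]
    have e4 : 0 ≤ M * s ^ 2 := by positivity
    linarith
  have hhi : u0 (q * ν) ≤ 0 := by
    have hqν : 0 < q * ν := by positivity
    have h := (abs_le.1 (c0 (q * ν) ⟨hqν.le, hνT.le⟩)).2
    have e1 : 0 ≤ (-c - b) * (q * ν) ^ 2 := mul_nonneg (by linarith) (by positivity)
    have e2 : c * (q * ν) ^ 2 = 4 * (q * ν ^ 2) := by rw [← hqc]; ring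
    have e3 : M * (q * ν) ^ 3 ≤ q * ν ^ 2 := by
      have : M * (q * ν) ^ 3 = (ν * (M * q ^ 2)) * (q * ν ^ 2) := by ring
      rw [this]
      exact mul_le_of_le_one_left (by positivity) hνM.le
    have e4 : 0 ≤ q * ν ^ 2 := by positivity
    have e5 : ν * (q * ν) = q * ν ^ 2 := by ring
    linarith
  have hcont : Continuous u0 := continuous_iff_continuousAt.2 fun t => (h0 t).continuousAt
  obtain ⟨τ, hτ, hτ0⟩ := intermediate_value_Icc' hsq hcont.continuousOn ⟨hhi, hlo⟩
  have hτp : 0 < τ := lt_of_lt_of_le hs0 hτ.1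
  have hτq : τ ≤ q * ν := hτ.2
  have hτT : τ ≤ T := by linarith
  have hτm : τ ∈ Set.Icc (0:ℝ) T := ⟨hτp.le, hτT⟩
  have d1 : deriv u0 = u1 := funext fun t => (h0 t).deriv
  have d2 : deriv u1 = u2 := funext fun t => (h1 t).deriv
  have hconc : StrictConcaveOn ℝ (Set.Icc 0 T) u0 := by
    apply strictConcaveOn_of_deriv2_neg (convex_Icc 0 T) hcont.continuousOn
    intro t ht
    simp only [Function.iterate_succ, Function.iterate_zero, Function.comp, id]
    rw [d1, d2]
    have := hneg t (interior_subset ht)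
    linarith
  have hpos : ∀ t ∈ Set.Ioo (0:ℝ) τ, 0 < u0 t := by
    intro t ht
    have ha : 0 < 1 - t / τ := by rw [sub_pos, div_lt_one hτp]; exact ht.2
    have h := hconc.2 h00 hτm hτp.ne ha (div_pos ht.1 hτp) (by ring)
    rw [hu0, hτ0] at h
    have e : t / τ * τ = t := by field_simp
    simpa [e] using h
  -- estimates
  have t0 := a0 τ hτm
  have t1 := a1 τ hτm
  rw [hτ0] at t0
  obtain ⟨ρ, hρ⟩ : ∃ ρ, ρ = -(ν + b * τ / 2 + d * τ ^ 2 / 6) := ⟨_, rfl⟩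
  have hρb : |ρ| ≤ M * τ ^ 3 / 24 := by
    have e : (0 - ν * τ - b * τ ^ 2 / 2 - d * τ ^ 3 / 6) = ρ * τ := by rw [hρ]; ring
    rw [e, Real.norm_eq_abs, abs_mul, abs_of_pos hτp] at t0
    have : |ρ| * τ ≤ (M * τ ^ 3 / 24) * τ := t0.trans (le_of_eq (by ring))
    exact le_of_mul_le_mul_right this hτp
  obtain ⟨σ, hσ⟩ : ∃ σ, σ = u1 τ - ν - b * τ - d * τ ^ 2 / 2 := ⟨_, rfl⟩
  rw [← hσ, Real.norm_eq_abs] at t1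
  have hb0 : b ≠ 0 := by intro h; rw [h] at hbc; linarith
  have hcb : c ≤ |b| := by rw [abs_of_neg (by linarith)]; linarith
  obtain ⟨e, he⟩ : ∃ e, e = τ + 2 * ν / b := ⟨_, rfl⟩
  have hbe : b * e = -(d * τ ^ 2 / 3) - 2 * ρ := by
    rw [he, hρ]; field_simp; ring
  have hτ2 : τ ^ 2 ≤ (q * ν) ^ 2 := pow_le_pow_left₀ hτp.le hτq 2
  have hτ3 : τ ^ 3 ≤ (q * ν) ^ 3 := pow_le_pow_left₀ hτp.le hτq 3
  have hdτ : |d * τ ^ 2| ≤ M * τ ^ 2 := by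
    rw [abs_mul, abs_of_nonneg (sq_nonneg τ)]
    exact mul_le_mul_of_nonneg_right hdM (sq_nonneg τ)
  have heb : |e| ≤ K1 * ν ^ 2 := by
    have s1 : c * |e| ≤ |b * e| := by
      rw [abs_mul]; exact mul_le_mul_of_nonneg_right hcb (abs_nonneg _)
    have s2 : |b * e| ≤ M * τ ^ 2 / 3 + M * τ ^ 3 / 12 := by
      rw [hbe, abs_le]
      have := abs_le.1 hdτ
      have := abs_le.1 hρb
      constructor <;> linarith
    have s3 : M * τ ^ 3 ≤ M * T * τ ^ 2 := by
      have : M * τ ^ 3 = M * τ * τ ^ 2 := by ring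
      rw [this]
      gcongr
    have s4 : M * (1 + T) * τ ^ 2 ≤ M * (1 + T) * (q * ν) ^ 2 := by gcongr
    have s5 : M * (1 + T) * (q * ν) ^ 2 = c * (K1 * ν ^ 2) := by
      have : c * (K1 * ν ^ 2) = (K1 * c) * ν ^ 2 := by ring
      rw [this, hK1c]; ring
    have s6 : 0 ≤ M * τ ^ 2 := by positivity
    have s7 : 0 ≤ M * T * τ ^ 2 := by positivity
    have s8 : c * |e| ≤ c * (K1 * ν ^ 2) := by linarith
    exact le_of_mul_le_mul_left s8 hc
  refine ⟨τ, hτp, hτT, hτq, hτ0, hpos, ?_, ?_⟩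
  · rw [← he]
    refine heb.trans ?_
    gcongr
    linarith
  · have key : u1 τ + ν - (2 * d / (3 * b ^ 2)) * ν ^ 2
        = d / 6 * e * (τ - 2 * ν / b) + (σ - 2 * ρ) := by
      have hbτ : b * τ = -2 * ν - d * τ ^ 2 / 3 - 2 * ρ := by rw [hρ]; ring
      have hu1 : u1 τ = σ + ν + b * τ + d * τ ^ 2 / 2 := by rw [hσ]; ring
      rw [hu1, hbτ, he]; field_simp; ring
    rw [key]
    have hr : |τ - 2 * ν / b| ≤ 2 * (q * ν) := by
      have : |2 * ν / b| ≤ q * ν := by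
        rw [abs_div, abs_of_pos (by positivity : 0 < 2 * ν), div_le_iff₀ (by linarith)]
        have : q * ν * c ≤ q * ν * |b| := by gcongr
        have : q * ν * c = 4 * ν := by rw [← hqc]; ring
        linarith
      have := abs_le.1 this
      rw [abs_le]; constructor <;> linarith
    have p1 : |d / 6 * e * (τ - 2 * ν / b)| ≤ M / 6 * (K1 * ν ^ 2) * (2 * (q * ν)) := by
      rw [abs_mul, abs_mul]
      have : |d / 6| ≤ M / 6 := by
        rw [abs_div, abs_of_pos (by norm_num : (0:ℝ) < 6)]; linarith
      gcongr
    have p2 : |σ - 2 * ρ| ≤ M * τ ^ 3 / 4 := by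
      have := abs_le.1 t1
      have := abs_le.1 hρb
      rw [abs_le]; constructor <;> linarith
    have p3 : M * τ ^ 3 ≤ M * (q * ν) ^ 3 := by gcongr
    have p4 : 0 ≤ M * K1 * q * ν ^ 3 := by positivity
    have p5 : 0 ≤ M * (q * ν) ^ 3 := by positivity
    have p6 : 0 ≤ K1 * ν ^ 3 := by positivity
    have p7 : (K1 + K2) * ν ^ 3 = K1 * ν ^ 3 + M * K1 * q * ν ^ 3 + M * (q * ν) ^ 3 := by
      rw [hK2]; ring
    have p8 : M / 6 * (K1 * ν ^ 2) * (2 * (q * ν)) = (M * K1 * q * ν ^ 3) / 3 := by ring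
    refine (abs_add_le _ _).trans ?_
    linarith

theorem aux_lie_contDiff {n : ℕ} (f : EuclideanSpace ℝ (Fin n) → EuclideanSpace ℝ (Fin n))
    (h : EuclideanSpace ℝ (Fin n) → ℝ) (m k : ℕ) (hk : k ≤ 3) (hf : ContDiff ℝ 3 f)
    (hh : ContDiff ℝ ((k + 1 : ℕ) : WithTop ℕ∞) (lieIter f h m)) :
    ContDiff ℝ (k : WithTop ℕ∞) (lieIter f h (m + 1)) := by
  have h1 : ContDiff ℝ (k : WithTop ℕ∞) (fderiv ℝ (lieIter f h m)) :=
    hh.fderiv_right (by push_cast; exact le_rfl)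
  have h2 : ContDiff ℝ (k : WithTop ℕ∞) f := hf.of_le (by exact_mod_cast hk)
  exact h1.clm_apply h2

theorem aux_lie_deriv {n : ℕ} (f : EuclideanSpace ℝ (Fin n) → EuclideanSpace ℝ (Fin n))
    (h : EuclideanSpace ℝ (Fin n) → ℝ) (m : ℕ)
    (φ : ℝ → EuclideanSpace ℝ (Fin n) → EuclideanSpace ℝ (Fin n))
    (hφ : ∀ t x, HasDerivAt (fun s => φ s x) (f (φ t x)) t)
    (hh : Differentiable ℝ (lieIter f h m)) (x : EuclideanSpace ℝ (Fin n)) (t : ℝ) :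
    HasDerivAt (fun s => lieIter f h m (φ s x)) (lieIter f h (m + 1) (φ t x)) t :=
  (hh (φ t x)).hasFDerivAt.comp_hasDerivAt t (hφ t x)

/-- First-return asymptotics near an invisible fold: for `x` on `{H = 0}` near `x₀` with
`ν = 𝓛_f H(x) > 0`, the orbit makes an excursion into `{H > 0}` and returns after a time
`τ = −2ν/𝓛²_f H(x) + O(ν²)`, with the return point and return value of `𝓛_f H` given to
the stated orders in `ν`. -/
theorem fold_return_map_asymptotics {n : ℕ}
    (f : EuclideanSpace ℝ (Fin n) → EuclideanSpace ℝ (Fin n))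
    (H : EuclideanSpace ℝ (Fin n) → ℝ)
    (hf : ContDiff ℝ 3 f) (hH : ContDiff ℝ 4 H)
    (φ : ℝ → EuclideanSpace ℝ (Fin n) → EuclideanSpace ℝ (Fin n))
    (hφ0 : ∀ x, φ 0 x = x)
    (hφ : ∀ t x, HasDerivAt (fun s => φ s x) (f (φ t x)) t)
    (x₀ : EuclideanSpace ℝ (Fin n)) (hHx₀ : H x₀ = 0)
    (hV₀ : lieIter f H 1 x₀ = 0) (hinv : lieIter f H 2 x₀ < 0) :
    ∃ δ > (0:ℝ), ∃ K > (0:ℝ), ∀ x : EuclideanSpace ℝ (Fin n), H x = 0 → ‖x - x₀‖ < δ →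
      0 < lieIter f H 1 x →
      ∃ τ > (0:ℝ),
        H (φ τ x) = 0 ∧
        (∀ t ∈ Set.Ioo (0:ℝ) τ, 0 < H (φ t x)) ∧
        |τ + 2 * lieIter f H 1 x / lieIter f H 2 x| ≤ K * (lieIter f H 1 x) ^ 2 ∧
        ‖φ τ x - x + (2 * lieIter f H 1 x / lieIter f H 2 x) • f x‖
          ≤ K * (lieIter f H 1 x) ^ 2 ∧
        |lieIter f H 1 (φ τ x) + lieIter f H 1 x -
            (2 * lieIter f H 3 x / (3 * (lieIter f H 2 x) ^ 2)) * (lieIter f H 1 x) ^ 2|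
          ≤ K * (lieIter f H 1 x) ^ 3 := by
  have C0 : ContDiff ℝ ((4:ℕ) : WithTop ℕ∞) (lieIter f H 0) := hH
  have C1 := aux_lie_contDiff f H 0 3 (by norm_num) hf C0
  have C2 := aux_lie_contDiff f H 1 2 (by norm_num) hf C1
  have C3 := aux_lie_contDiff f H 2 1 (by norm_num) hf C2
  have C4 := aux_lie_contDiff f H 3 0 (by norm_num) hf C3
  have D0 := aux_lie_deriv f H 0 φ hφ (C0.differentiable (by norm_num))
  have D1 := aux_lie_deriv f H 1 φ hφ (C1.differentiable (by norm_num))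
  have D2 := aux_lie_deriv f H 2 φ hφ (C2.differentiable (by norm_num))
  have D3 := aux_lie_deriv f H 3 φ hφ (C3.differentiable (by norm_num))
  have hfd : Differentiable ℝ f := hf.differentiable (by norm_num)
  have Cg : Continuous (fun y => fderiv ℝ f y (f y)) :=
    (hf.continuous_fderiv (by norm_num)).clm_apply hf.continuous
  obtain ⟨c, hcd⟩ : ∃ c, c = -lieIter f H 2 x₀ / 2 := ⟨_, rfl⟩
  have hc : 0 < c := by rw [hcd]; linarith
  obtain ⟨r, hr, hrc⟩ : ∃ r > 0, ∀ y ∈ Metric.closedBall x₀ r, lieIter f H 2 y ≤ -c := by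
    have : ∀ᶠ y in nhds x₀, lieIter f H 2 y < -c :=
      C2.continuous.continuousAt.eventually (gt_mem_nhds (by rw [hcd]; linarith))
    obtain ⟨r, hr, h⟩ := Metric.nhds_basis_closedBall.eventually_iff.1 this
    exact ⟨r, hr, fun y hy => (h hy).le⟩
  have hcomp := isCompact_closedBall x₀ r
  obtain ⟨M2, hM2⟩ := hcomp.exists_bound_of_continuousOn C2.continuous.continuousOn
  obtain ⟨M3, hM3⟩ := hcomp.exists_bound_of_continuousOn C3.continuous.continuousOn
  obtain ⟨M4, hM4⟩ := hcomp.exists_bound_of_continuousOn C4.continuous.continuousOn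
  obtain ⟨Mf, hMf⟩ := hcomp.exists_bound_of_continuousOn hf.continuous.continuousOn
  obtain ⟨Mg, hMg⟩ := hcomp.exists_bound_of_continuousOn Cg.continuousOn
  obtain ⟨M, hMd⟩ : ∃ M, M = 1 + |M2| + |M3| + |M4| + |Mf| + |Mg| := ⟨_, rfl⟩
  have n2 := abs_nonneg M2
  have n3 := abs_nonneg M3
  have n4 := abs_nonneg M4
  have nf := abs_nonneg Mf
  have ng := abs_nonneg Mg
  have l2 := le_abs_self M2
  have l3 := le_abs_self M3
  have l4 := le_abs_self M4
  have lf := le_abs_self Mf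
  have lg := le_abs_self Mg
  have hM : 1 ≤ M := by linarith
  obtain ⟨T, hTd⟩ : ∃ T, T = r / (2 * M) := ⟨_, rfl⟩
  have hM0 : 0 < M := by linarith
  have hT : 0 < T := by rw [hTd]; positivity
  have hTM : M * T = r / 2 := by rw [hTd]; field_simp
  obtain ⟨K, hK, ε, hε, hcore⟩ := aux_core c M T hc hM hT
  obtain ⟨δ₁, hδ₁, hδν⟩ : ∃ δ > 0, ∀ y ∈ Metric.ball x₀ δ, lieIter f H 1 y < ε := by
    have : ∀ᶠ y in nhds x₀, lieIter f H 1 y < ε :=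
      C1.continuous.continuousAt.eventually (gt_mem_nhds (by rw [hV₀]; exact hε))
    obtain ⟨r, hr, h⟩ := Metric.nhds_basis_ball.eventually_iff.1 this
    exact ⟨r, hr, fun y hy => h hy⟩
  have hK' : 0 < M * (4 / c) ^ 2 := by positivity
  refine ⟨min δ₁ (r / 2), by positivity, K + K * M + M * (4 / c) ^ 2, by positivity, ?_⟩
  intro x hHx hx hν
  have hx1 : lieIter f H 1 x < ε :=
    hδν x (by rw [mem_ball_iff_norm]; exact hx.trans_le (min_le_left _ _))
  have hxr : ‖x - x₀‖ < r / 2 := hx.trans_le (min_le_right _ _)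
  have hball : ∀ y, ‖y - x‖ ≤ r / 2 → y ∈ Metric.closedBall x₀ r := by
    intro y hy
    rw [mem_closedBall_iff_norm]
    have := norm_add_le (y - x) (x - x₀)
    rw [sub_add_sub_cancel] at this
    linarith
  have hstay : ∀ t ∈ Set.Icc (0:ℝ) T, φ t x ∈ Metric.closedBall x₀ r := by
    intro t ht
    have h : ‖φ t x - x‖ ≤ M * t := by
      refine image_norm_le_of_norm_deriv_right_lt_deriv_boundary (a := 0) (b := T)
        (f := fun t => φ t x - x) (f' := fun t => f (φ t x))
        (B := fun t => M * t) (B' := fun _ => M)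
        (fun t _ => ((hφ t x).sub_const x).continuousAt.continuousWithinAt)
        (fun t _ => ((hφ t x).sub_const x).hasDerivWithinAt) (by simp [hφ0])
        (fun t => by simpa using (hasDerivAt_id' t).const_mul M) ?_ ht
      intro t ht h
      have hm : M * t ≤ M * T := mul_le_mul_of_nonneg_left ht.2.le hM0.le
      have := hMf (φ t x) (hball _ (by linarith))
      linarith
    have hm : M * t ≤ M * T := mul_le_mul_of_nonneg_left ht.2 hM0.le
    exact hball _ (by linarith)
  have hxm : x ∈ Metric.closedBall x₀ r := hball x (by simp; positivity)
  have hres := hcore (fun t => lieIter f H 0 (φ t x)) (fun t => lieIter f H 1 (φ t x))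
    (fun t => lieIter f H 2 (φ t x)) (fun t => lieIter f H 3 (φ t x))
    (fun t => lieIter f H 4 (φ t x)) (D0 x) (D1 x) (D2 x) (D3 x)
    (fun t ht => hrc _ (hstay t ht))
    (fun t ht => (hM2 _ (hstay t ht)).trans (by linarith))
    (fun t ht => (hM3 _ (hstay t ht)).trans (by linarith))
    (fun t ht => (hM4 _ (hstay t ht)).trans (by linarith))
    (by simp only [hφ0]; exact hHx) (by simpa only [hφ0] using hν) (by simpa only [hφ0] using hx1)
  simp only [hφ0] at hres
  obtain ⟨τ, hτ, hτT, hτq, hz, hpos, hE1, hE3⟩ := hres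
  have hτm : τ ∈ Set.Icc (0:ℝ) T := ⟨hτ.le, hτT⟩
  have w1 : ∀ t ∈ Set.Icc (0:ℝ) T, ‖f (φ t x) - f x‖ ≤ M * t := by
    intro t ht
    have := aux_integrate (fun t => f (φ t x) - f x) (fun t => fderiv ℝ f (φ t x) (f (φ t x))) T M 0
      (fun t => ((hfd (φ t x)).hasFDerivAt.comp_hasDerivAt t (hφ t x)).sub_const (f x))
      (by simp [hφ0])
      (fun t ht => by
        have := hMg _ (hstay t ht)
        simp only [pow_zero, mul_one]
        linarith) t ht
    simpa using this
  have w0 : ‖φ τ x - x - τ • f x‖ ≤ M * τ ^ 2 / 2 := by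
    have := aux_integrate (fun t => φ t x - x - t • f x) (fun t => f (φ t x) - f x) T M 1
      (fun t => by
        simpa using ((hφ t x).sub_const x).fun_sub ((hasDerivAt_id' t).smul_const (f x)))
      (by simp [hφ0]) (by simpa using w1) τ hτm
    norm_num at this
    exact this
  obtain ⟨ν, hνd⟩ : ∃ ν, ν = lieIter f H 1 x := ⟨_, rfl⟩
  rw [← hνd] at hν hτq hE1 hE3 ⊢
  have g1 : 0 ≤ K * M * ν ^ 2 := by positivity
  have g2 : 0 ≤ M * (4 / c) ^ 2 * ν ^ 2 := by positivity
  have g3 : 0 ≤ K * ν ^ 2 := by positivity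
  have g4 : 0 ≤ (K * M + M * (4 / c) ^ 2) * ν ^ 3 := by positivity
  refine ⟨τ, hτ, hz, hpos, hE1.trans (by linarith), ?_, hE3.trans (by linarith)⟩
  have e : φ τ x - x + (2 * ν / lieIter f H 2 x) • f x
      = (φ τ x - x - τ • f x) + (τ + 2 * ν / lieIter f H 2 x) • f x := by
    rw [add_smul]; abel
  rw [e]
  refine (norm_add_le _ _).trans ?_
  rw [norm_smul, Real.norm_eq_abs]
  have hfx : ‖f x‖ ≤ M := (hMf x hxm).trans (by linarith)
  have q1 : |τ + 2 * ν / lieIter f H 2 x| * ‖f x‖ ≤ K * ν ^ 2 * M := by gcongr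
  have q2 : M * τ ^ 2 ≤ M * (4 / c * ν) ^ 2 := by gcongr
  have q3 : M * (4 / c * ν) ^ 2 = M * (4 / c) ^ 2 * ν ^ 2 := by ring
  linarith
end

section
/- Let f^L, f^R : ℝⁿ → ℝⁿ be C¹, H : ℝⁿ → ℝ be C², and suppose there is a C¹ function α : ℝⁿ → ℝ with 𝓛_{f^L}H(x) − 𝓛_{f^R}H(x) = α(x)·H(x) for all x. Write V = 𝓛_{f^L}H. Let x satisfy H(x) = 0 and V(x) = 0, and write a = 𝓛²_{f^L}H(x), b = 𝓛²_{f^R}H(x), assuming a ≠ b. Define the second-order sliding vector field f^T(x) = (f^R(x)·a − f^L(x)·b)/(a − b). Then f^T(x) is tangent to the tangency surface 𝒯 = {y : H(y) = 0, V(y) = 0} in the sense that DH(x)[f^T(x)] = 0 and DV(x)[f^T(x)] = 0. Moreover f^T(x) is the value at s = a/(a − b) of the convex-combination family F(x,s) = (1−s)f^L(x) + s f^R(x), and for every s ∈ ℝ one has DV(x)[F(x,s)] = (1−s)·a + s·b. -/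
/-- For a second-order Filippov system, at a tangency point `x` (where `H(x) = 0` and
`V(x) = 𝓛_{f^L}H(x) = 0`) with `a = 𝓛²_{f^L}H(x) ≠ b = 𝓛²_{f^R}H(x)`, the second-order
sliding vector field `f^T(x) = (a·f^R(x) − b·f^L(x))/(a−b)` is tangent to the tangency
surface: `DH(x)[f^T(x)] = 0` and `DV(x)[f^T(x)] = 0`.  Moreover `f^T(x) = F(x, a/(a−b))`
for the convex-combination family `F(x,s) = (1−s)f^L(x) + s f^R(x)`, and for every `s`,
`DV(x)[F(x,s)] = (1−s)a + s b`. -/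
theorem second_order_sliding_tangent {n : ℕ}
    (fL fR : EuclideanSpace ℝ (Fin n) → EuclideanSpace ℝ (Fin n))
    (H : EuclideanSpace ℝ (Fin n) → ℝ) (α : EuclideanSpace ℝ (Fin n) → ℝ)
    (hfL : ContDiff ℝ 1 fL) (hfR : ContDiff ℝ 1 fR) (hH : ContDiff ℝ 2 H)
    (hα : ContDiff ℝ 1 α)
    (hso : ∀ x, lieIter fL H 1 x - lieIter fR H 1 x = α x * H x)
    (x : EuclideanSpace ℝ (Fin n)) (hHx : H x = 0) (hVx : lieIter fL H 1 x = 0)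
    (a b : ℝ) (ha : a = lieIter fL H 2 x) (hb : b = lieIter fR H 2 x) (hab : a ≠ b)
    (fT : EuclideanSpace ℝ (Fin n))
    (hfT : fT = (a - b)⁻¹ • (a • fR x - b • fL x)) :
    fderiv ℝ H x fT = 0 ∧
    fderiv ℝ (lieIter fL H 1) x fT = 0 ∧
    fT = (1 - a / (a - b)) • fL x + (a / (a - b)) • fR x ∧
    ∀ s : ℝ, fderiv ℝ (lieIter fL H 1) x ((1 - s) • fL x + s • fR x)
      = (1 - s) * a + s * b := by
  have h1L : fderiv ℝ H x (fL x) = 0 := hVx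
  have h1R : fderiv ℝ H x (fR x) = 0 := by
    have h := hso x
    rw [hVx, hHx, mul_zero, zero_sub, neg_eq_zero] at h
    exact h
  have hD : ContDiff ℝ 1 (fderiv ℝ H) := hH.fderiv_right (by norm_num)
  have hVR : DifferentiableAt ℝ (lieIter fR H 1) x :=
    ((hD.clm_apply hfR).differentiable (by norm_num)) x
  have hαd : DifferentiableAt ℝ α x := hα.differentiable (by norm_num) x
  have hHd : DifferentiableAt ℝ H x := hH.differentiable (by norm_num) x
  have hEq : lieIter fL H 1 = lieIter fR H 1 + α * H := by
    funext y
    have h := hso y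
    simp only [Pi.add_apply, Pi.mul_apply]
    linarith
  have h2L : fderiv ℝ (lieIter fL H 1) x (fL x) = a := ha.symm
  have h2R' : fderiv ℝ (lieIter fR H 1) x (fR x) = b := hb.symm
  have h2R : fderiv ℝ (lieIter fL H 1) x (fR x) = b := by
    rw [hEq, fderiv_add hVR (hαd.mul hHd), fderiv_mul hαd hHd]
    simp [h2R', h1R, hHx]
  have hne : a - b ≠ 0 := sub_ne_zero.mpr hab
  refine ⟨?_, ?_, ?_, ?_⟩
  · rw [hfT]
    simp [h1L, h1R]
  · rw [hfT]
    simp only [map_smul, map_sub, h2L, h2R, smul_eq_mul]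
    ring
  · have e : 1 - a / (a - b) = -((a - b)⁻¹ * b) := by
      field_simp
      ring
    rw [hfT, e, div_eq_inv_mul]
    module
  · intro s
    simp only [map_add, map_smul, h2L, h2R, smul_eq_mul]
end

section
/- Let n = 2 with coordinates x = (x₁, x₂) and H(x) = x₁. For Z ∈ {L, R}, let f^Z : ℝ² → ℝ² be the quadratic polynomial vector field f^Z(x) = (a_{1Z}x₁ + a₂x₂ + a_{3Z}x₁² + a_{4Z}x₁x₂ + a₅x₂², b_{0Z} + b_{1Z}x₁ + b_{2Z}x₂ + b_{3Z}x₁² + b_{4Z}x₁x₂ + b_{5Z}x₂²), where the coefficients a₂ > 0 and a₅ are shared between Z = L and Z = R (so the system is second-order), and b_{0L} > 0 > b_{0R} (so the origin is an invisible fold for both pieces). Then for each Z ∈ {L,R}: 𝓛_{f^Z}H(0) = 0, 𝓛²_{f^Z}H(0) = a₂ b_{0Z}, and 𝓛³_{f^Z}H(0) = (a_{1Z} a₂ + a₂ b_{2Z} + 2 a₅ b_{0Z}) b_{0Z}; and consequently Λ(0) := 𝓛³_{f^L}H(0)/(𝓛²_{f^L}H(0))² − 𝓛³_{f^R}H(0)/(𝓛²_{f^R}H(0))²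 = (σ_L − σ_R)/a₂, where σ_Z = a_{1Z}/b_{0Z} + b_{2Z}/b_{0Z} − a₅/a₂. In particular, since a₂ > 0, the sign of Λ(0) equals the sign of σ_L − σ_R. -/
theorem quad_hasFDerivAt (c0 c1 c2 c3 c4 c5 : ℝ) (x : EuclideanSpace ℝ (Fin 2)) :
    HasFDerivAt (fun x : EuclideanSpace ℝ (Fin 2) => c0 + c1 * x 0 + c2 * x 1 + c3 * (x 0) ^ 2
      + c4 * (x 0) * (x 1) + c5 * (x 1) ^ 2)
      ((c1 + 2 * c3 * x 0 + c4 * x 1) • (EuclideanSpace.proj 0 : EuclideanSpace ℝ (Fin 2) →L[ℝ] ℝ)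
        + (c2 + c4 * x 0 + 2 * c5 * x 1) •
          (EuclideanSpace.proj 1 : EuclideanSpace ℝ (Fin 2) →L[ℝ] ℝ)) x := by
  have h0 : HasFDerivAt (fun x : EuclideanSpace ℝ (Fin 2) => x 0)
      (EuclideanSpace.proj 0 : EuclideanSpace ℝ (Fin 2) →L[ℝ] ℝ) x :=
    (EuclideanSpace.proj 0 : EuclideanSpace ℝ (Fin 2) →L[ℝ] ℝ).hasFDerivAt
  have h1 : HasFDerivAt (fun x : EuclideanSpace ℝ (Fin 2) => x 1)
      (EuclideanSpace.proj 1 : EuclideanSpace ℝ (Fin 2) →L[ℝ] ℝ) x :=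
    (EuclideanSpace.proj 1 : EuclideanSpace ℝ (Fin 2) →L[ℝ] ℝ).hasFDerivAt
  have h := ((((((hasFDerivAt_const c0 x).add (h0.const_mul c1)).add (h1.const_mul c2)).add
    ((h0.pow 2).const_mul c3)).add ((h0.const_mul c4).mul h1)).add ((h1.pow 2).const_mul c5))
  refine h.congr_fderiv ?_
  ext v
  simp
  ring

theorem lie_quad (a1 a2 a3 a4 a5 b0 b1 b2 b3 b4 b5 : ℝ)
    (f : EuclideanSpace ℝ (Fin 2) → EuclideanSpace ℝ (Fin 2))
    (H : EuclideanSpace ℝ (Fin 2) → ℝ)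
    (hH : ∀ x, H x = x 0)
    (hf : ∀ x : EuclideanSpace ℝ (Fin 2), f x = (WithLp.equiv 2 (Fin 2 → ℝ)).symm
      ![a1 * x 0 + a2 * x 1 + a3 * (x 0) ^ 2 + a4 * (x 0) * (x 1) + a5 * (x 1) ^ 2,
        b0 + b1 * x 0 + b2 * x 1 + b3 * (x 0) ^ 2 + b4 * (x 0) * (x 1) + b5 * (x 1) ^ 2]) :
    lieIter f H 1 0 = 0 ∧ lieIter f H 2 0 = a2 * b0 ∧
    lieIter f H 3 0 = (a1 * a2 + a2 * b2 + 2 * a5 * b0) * b0 := by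
  have e0 : lieIter f H 0 = fun x => 0 + 1 * x 0 + 0 * x 1 + 0 * (x 0) ^ 2
      + 0 * (x 0) * (x 1) + 0 * (x 1) ^ 2 := by
    funext x
    simp [lieIter, hH]
  have e1 : lieIter f H 1 = fun x => 0 + a1 * x 0 + a2 * x 1 + a3 * (x 0) ^ 2
      + a4 * (x 0) * (x 1) + a5 * (x 1) ^ 2 := by
    funext x
    change fderiv ℝ (lieIter f H 0) x (f x) = _
    rw [e0, (quad_hasFDerivAt _ _ _ _ _ _ x).fderiv, hf]
    simp
  have e2 : lieIter f H 2 = fun x =>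
      (a1 + (2 * a3) * x 0 + a4 * x 1 + 0 * (x 0) ^ 2 + 0 * (x 0) * (x 1) + 0 * (x 1) ^ 2) *
      (0 + a1 * x 0 + a2 * x 1 + a3 * (x 0) ^ 2 + a4 * (x 0) * (x 1) + a5 * (x 1) ^ 2) +
      (a2 + a4 * x 0 + (2 * a5) * x 1 + 0 * (x 0) ^ 2 + 0 * (x 0) * (x 1) + 0 * (x 1) ^ 2) *
      (b0 + b1 * x 0 + b2 * x 1 + b3 * (x 0) ^ 2 + b4 * (x 0) * (x 1) + b5 * (x 1) ^ 2) := by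
    funext x
    change fderiv ℝ (lieIter f H 1) x (f x) = _
    rw [e1, (quad_hasFDerivAt _ _ _ _ _ _ x).fderiv, hf]
    simp
  refine ⟨by rw [e1]; simp, by rw [e2]; simp, ?_⟩
  change fderiv ℝ (lieIter f H 2) 0 (f 0) = _
  have h := ((quad_hasFDerivAt a1 (2 * a3) a4 0 0 0 0).mul
      (quad_hasFDerivAt 0 a1 a2 a3 a4 a5 0)).add
    ((quad_hasFDerivAt a2 a4 (2 * a5) 0 0 0 0).mul (quad_hasFDerivAt b0 b1 b2 b3 b4 b5 0))
  have h' := h.fderiv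
  rw [e2]
  refine (congrArg (fun T : EuclideanSpace ℝ (Fin 2) →L[ℝ] ℝ => T (f 0)) h').trans ?_
  rw [hf]
  simp
  ring

/-- Planar second-order Filippov system at an invisible–invisible two-fold: the Lie
derivatives of `H(x) = x₁` at the origin for the quadratic vector fields `f^L, f^R`
(sharing the coefficients `a₂ > 0` and `a₅`, with `b_{0L} > 0 > b_{0R}`) are
`𝓛_{f^Z}H(0) = 0`, `𝓛²_{f^Z}H(0) = a₂b_{0Z}`,
`𝓛³_{f^Z}H(0) = (a_{1Z}a₂ + a₂b_{2Z} + 2a₅b_{0Z})b_{0Z}`, and consequently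
`Λ(0) = (σ_L − σ_R)/a₂` where `σ_Z = a_{1Z}/b_{0Z} + b_{2Z}/b_{0Z} − a₅/a₂`;
in particular `Λ(0)` and `σ_L − σ_R` have the same sign. -/
theorem planar_two_fold_Lambda
    (a1L a1R a2 a3L a3R a4L a4R a5 : ℝ)
    (b0L b0R b1L b1R b2L b2R b3L b3R b4L b4R b5L b5R : ℝ)
    (ha2 : 0 < a2) (hb0L : 0 < b0L) (hb0R : b0R < 0)
    (fL fR : EuclideanSpace ℝ (Fin 2) → EuclideanSpace ℝ (Fin 2))
    (H : EuclideanSpace ℝ (Fin 2) → ℝ)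
    (hH : ∀ x, H x = x 0)
    (hfL : ∀ x : EuclideanSpace ℝ (Fin 2), fL x = (WithLp.equiv 2 (Fin 2 → ℝ)).symm
      ![a1L * x 0 + a2 * x 1 + a3L * (x 0) ^ 2 + a4L * (x 0) * (x 1) + a5 * (x 1) ^ 2,
        b0L + b1L * x 0 + b2L * x 1 + b3L * (x 0) ^ 2 + b4L * (x 0) * (x 1) + b5L * (x 1) ^ 2])
    (hfR : ∀ x : EuclideanSpace ℝ (Fin 2), fR x = (WithLp.equiv 2 (Fin 2 → ℝ)).symm
      ![a1R * x 0 + a2 * x 1 + a3R * (x 0) ^ 2 + a4R * (x 0) * (x 1) + a5 * (x 1) ^ 2,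
        b0R + b1R * x 0 + b2R * x 1 + b3R * (x 0) ^ 2 + b4R * (x 0) * (x 1) + b5R * (x 1) ^ 2]) :
    lieIter fL H 1 0 = 0 ∧ lieIter fR H 1 0 = 0 ∧
    lieIter fL H 2 0 = a2 * b0L ∧ lieIter fR H 2 0 = a2 * b0R ∧
    lieIter fL H 3 0 = (a1L * a2 + a2 * b2L + 2 * a5 * b0L) * b0L ∧
    lieIter fR H 3 0 = (a1R * a2 + a2 * b2R + 2 * a5 * b0R) * b0R ∧
    lieIter fL H 3 0 / (lieIter fL H 2 0) ^ 2 - lieIter fR H 3 0 / (lieIter fR H 2 0) ^ 2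
      = ((a1L / b0L + b2L / b0L - a5 / a2) - (a1R / b0R + b2R / b0R - a5 / a2)) / a2 ∧
    Real.sign (lieIter fL H 3 0 / (lieIter fL H 2 0) ^ 2 -
        lieIter fR H 3 0 / (lieIter fR H 2 0) ^ 2)
      = Real.sign ((a1L / b0L + b2L / b0L - a5 / a2) - (a1R / b0R + b2R / b0R - a5 / a2)) := by
  obtain ⟨l1, l2, l3⟩ := lie_quad a1L a2 a3L a4L a5 b0L b1L b2L b3L b4L b5L fL H hH hfL
  obtain ⟨r1, r2, r3⟩ := lie_quad a1R a2 a3R a4R a5 b0R b1R b2R b3R b4R b5R fR H hH hfR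
  have key : lieIter fL H 3 0 / (lieIter fL H 2 0) ^ 2
      - lieIter fR H 3 0 / (lieIter fR H 2 0) ^ 2
      = ((a1L / b0L + b2L / b0L - a5 / a2) - (a1R / b0R + b2R / b0R - a5 / a2)) / a2 := by
    rw [l2, l3, r2, r3]
    have h1 := ha2.ne'
    have h2 := hb0L.ne'
    have h3 := hb0R.ne
    field_simp
    ring
  refine ⟨l1, r1, l2, r2, l3, r3, key, ?_⟩
  rw [key]
  generalize (a1L / b0L + b2L / b0L - a5 / a2) - (a1R / b0R + b2R / b0R - a5 / a2) = s
  rcases lt_trichotomy s 0 with h | h | h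
  · rw [Real.sign_of_neg h, Real.sign_of_neg (div_neg_of_neg_of_pos h ha2)]
  · simp [h]
  · rw [Real.sign_of_pos h, Real.sign_of_pos (div_pos h ha2)]
end

section
/- Let C ∈ (0, 1/2) and ζ₀ > 0, and set q = √((1 − 2C)/(2C + 1)) (equivalently q² = 1 − 4C/(2C+1)), ζ₁ = q² ζ₀, t₁ = (1 + q) ζ₀, and τ = (1 + q)² ζ₀. Define x₁, x₂ : [0, τ] → ℝ by: for t ∈ [0, t₁], x₂(t) = ζ₀ − t and x₁(t) = −C ζ₀² + ζ₀ t − t²/2; and for t ∈ [t₁, τ], x₂(t) = x₂(t₁) + (t − t₁) and x₁(t) = x₁(t₁) + x₂(t₁)(t − t₁) + (t − t₁)²/2. Then: (x₁, x₂) is continuous and satisfies x₁' = x₂ throughout, with x₂' = −1 on (0, t₁) and x₂' = +1 on (t₁, τ); x₁(0) = −C ζ₀², x₂(0) = ζ₀; x₁(t) > −C x₂(t)|x₂(t)| for all t ∈ (0, t₁); x₁(t₁) = −C x₂(t₁)|x₂(t₁)| with x₂(t₁) = −q ζ₀ < 0; x₁(t) < −C x₂(t)|x₂(t)| for all t ∈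 (t₁, τ); and x₁(τ) = −C ζ₁², x₂(τ) = ζ₁ > 0. Consequently, the per-revolution times τ_j = (1+q)² (q²)^j ζ₀ obtained by iterating this return map satisfy ∑_{j=0}^∞ τ_j = ((2C+1)/(4C)) (1+q)² ζ₀. -/
/-- One revolution of the return map of the time-optimal double-integrator control system
(Fuller's phenomenon): starting on the switching curve `x₁ = −Cx₂|x₂|` at `(−Cζ₀², ζ₀)`,
the orbit follows the arc with `ẍ₁ = −1` until it meets the switching curve with `x₂ < 0`
at time `t₁`, then follows the arc with `ẍ₁ = +1` until returning to the switching curve at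
`(−Cζ₁², ζ₁)` at time `τ = (1+q)²ζ₀`, where `ζ₁ = q²ζ₀`; the per-revolution times form a
geometric series with finite total sum `((2C+1)/(4C))(1+q)²ζ₀`. -/
theorem fuller_return_map (C ζ₀ q ζ₁ t₁ τ : ℝ)
    (hC0 : 0 < C) (hC1 : C < 1 / 2) (hζ₀ : 0 < ζ₀)
    (hq : q = Real.sqrt ((1 - 2 * C) / (2 * C + 1)))
    (hζ₁ : ζ₁ = q ^ 2 * ζ₀)
    (ht₁ : t₁ = (1 + q) * ζ₀)
    (hτ : τ = (1 + q) ^ 2 * ζ₀)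
    (x₁ x₂ : ℝ → ℝ)
    (hx₂a : ∀ t ∈ Set.Icc (0:ℝ) t₁, x₂ t = ζ₀ - t)
    (hx₁a : ∀ t ∈ Set.Icc (0:ℝ) t₁, x₁ t = -C * ζ₀ ^ 2 + ζ₀ * t - t ^ 2 / 2)
    (hx₂b : ∀ t ∈ Set.Icc t₁ τ, x₂ t = x₂ t₁ + (t - t₁))
    (hx₁b : ∀ t ∈ Set.Icc t₁ τ, x₁ t = x₁ t₁ + x₂ t₁ * (t - t₁) + (t - t₁) ^ 2 / 2) :
    ContinuousOn x₁ (Set.Icc 0 τ) ∧ ContinuousOn x₂ (Set.Icc 0 τ) ∧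
    (∀ t ∈ Set.Icc (0:ℝ) τ, HasDerivWithinAt x₁ (x₂ t) (Set.Icc 0 τ) t) ∧
    (∀ t ∈ Set.Ioo (0:ℝ) t₁, HasDerivWithinAt x₂ (-1) (Set.Ioo 0 t₁) t) ∧
    (∀ t ∈ Set.Ioo t₁ τ, HasDerivWithinAt x₂ 1 (Set.Ioo t₁ τ) t) ∧
    (x₁ 0 = -C * ζ₀ ^ 2 ∧ x₂ 0 = ζ₀) ∧
    (∀ t ∈ Set.Ioo (0:ℝ) t₁, -C * x₂ t * |x₂ t| < x₁ t) ∧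
    (x₁ t₁ = -C * x₂ t₁ * |x₂ t₁| ∧ x₂ t₁ = -q * ζ₀ ∧ x₂ t₁ < 0) ∧
    (∀ t ∈ Set.Ioo t₁ τ, x₁ t < -C * x₂ t * |x₂ t|) ∧
    (x₁ τ = -C * ζ₁ ^ 2 ∧ x₂ τ = ζ₁ ∧ 0 < ζ₁) ∧
    ∑' j : ℕ, (1 + q) ^ 2 * (q ^ 2) ^ j * ζ₀ = (2 * C + 1) / (4 * C) * (1 + q) ^ 2 * ζ₀ := by
  have hden : 0 < 2 * C + 1 := by linarith
  have hq0 : 0 < q := by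
    rw [hq]; exact Real.sqrt_pos.mpr (div_pos (by linarith) hden)
  have hqs : q ^ 2 = (1 - 2 * C) / (2 * C + 1) := by
    rw [hq]; exact Real.sq_sqrt (div_pos (by linarith) hden).le
  have hqm : q ^ 2 * (2 * C + 1) = 1 - 2 * C := by
    rw [hqs]; field_simp
  have ht0 : 0 < t₁ := by rw [ht₁]; positivity
  have hqz : 0 < q * ζ₀ := by positivity
  have hd : τ - t₁ = q * ζ₀ + q ^ 2 * ζ₀ := by rw [hτ, ht₁]; ring
  have hq2z : 0 < q ^ 2 * ζ₀ := by positivity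
  have htτ : t₁ < τ := by linarith
  have hx2t : x₂ t₁ = -q * ζ₀ := by
    rw [hx₂a t₁ ⟨ht0.le, le_rfl⟩, ht₁]; ring
  have hx1t : x₁ t₁ = C * q ^ 2 * ζ₀ ^ 2 := by
    rw [hx₁a t₁ ⟨ht0.le, le_rfl⟩, ht₁]
    linear_combination (-ζ₀ ^ 2 / 2) * hqm
  have hU : Set.Icc 0 τ = Set.Icc 0 t₁ ∪ Set.Icc t₁ τ :=
    (Set.Icc_union_Icc_eq_Icc ht0.le htτ.le).symm
  have hD : ∀ t ∈ Set.Icc (0:ℝ) τ, HasDerivWithinAt x₁ (x₂ t) (Set.Icc 0 τ) t := by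
    intro t ht
    rw [hU]
    apply HasDerivWithinAt.union
    · by_cases h : t ∈ Set.Icc 0 t₁
      · have h1 : HasDerivAt (fun t : ℝ => -C * ζ₀ ^ 2 + ζ₀ * t - t ^ 2 / 2) (x₂ t) t := by
          rw [hx₂a t h]
          have := (((hasDerivAt_id t).const_mul ζ₀).const_add (-C * ζ₀ ^ 2)).sub
            (((hasDerivAt_id t).pow 2).div_const 2)
          exact this.congr_deriv (by simp)
        exact h1.hasDerivWithinAt.congr hx₁a (hx₁a t h)
      · exact HasFDerivWithinAt.of_notMem_closure (by rwa [isClosed_Icc.closure_eq])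
    · by_cases h : t ∈ Set.Icc t₁ τ
      · have h1 : HasDerivAt (fun t : ℝ => x₁ t₁ + x₂ t₁ * (t - t₁) + (t - t₁) ^ 2 / 2)
            (x₂ t) t := by
          rw [hx₂b t h]
          have h0 := (hasDerivAt_id t).sub_const t₁
          have := ((h0.const_mul (x₂ t₁)).const_add (x₁ t₁)).add ((h0.pow 2).div_const 2)
          exact this.congr_deriv (by simp)
        exact h1.hasDerivWithinAt.congr hx₁b (hx₁b t h)
      · exact HasFDerivWithinAt.of_notMem_closure (by rwa [isClosed_Icc.closure_eq])
  refine ⟨fun t ht => (hD t ht).continuousWithinAt, ?_, hD, ?_, ?_, ?_, ?_, ?_, ?_, ?_, ?_⟩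
  · rw [hU]
    refine ContinuousOn.union_of_isClosed ?_ ?_ isClosed_Icc isClosed_Icc
    · exact ContinuousOn.congr (by fun_prop) hx₂a
    · exact ContinuousOn.congr (by fun_prop) hx₂b
  · intro t ht
    exact ((hasDerivAt_id t).const_sub ζ₀).hasDerivWithinAt.congr
      (fun s hs => hx₂a s (Set.Ioo_subset_Icc_self hs)) (hx₂a t (Set.Ioo_subset_Icc_self ht))
  · intro t ht
    exact (((hasDerivAt_id t).sub_const t₁).const_add (x₂ t₁)).hasDerivWithinAt.congr
      (fun s hs => hx₂b s (Set.Ioo_subset_Icc_self hs)) (hx₂b t (Set.Ioo_subset_Icc_self ht))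
  · have h0 : (0:ℝ) ∈ Set.Icc 0 t₁ := ⟨le_rfl, ht0.le⟩
    rw [hx₁a 0 h0, hx₂a 0 h0]
    constructor <;> ring
  · intro t ht
    have hm := Set.Ioo_subset_Icc_self ht
    have e1 : x₁ t = (1 / 2 - C) * ζ₀ ^ 2 - x₂ t ^ 2 / 2 := by
      rw [hx₁a t hm, hx₂a t hm]; ring
    have l1 : x₂ t < ζ₀ := by rw [hx₂a t hm]; linarith [ht.1]
    have l2 : -(q * ζ₀) < x₂ t := by
      have := ht.2
      rw [hx₂a t hm]; rw [ht₁] at this; linarith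
    rw [e1]
    rcases le_total 0 (x₂ t) with h | h
    · rw [abs_of_nonneg h]
      have h2 : x₂ t ^ 2 < ζ₀ ^ 2 := by gcongr
      have h3 : 0 < (1 / 2 - C) * (ζ₀ ^ 2 - x₂ t ^ 2) := mul_pos (by linarith) (by linarith)
      linarith
    · rw [abs_of_nonpos h]
      have h2 : x₂ t ^ 2 < (q * ζ₀) ^ 2 := sq_lt_sq' l2 (by linarith)
      have h3 : 0 < (2 * C + 1) * ((q * ζ₀) ^ 2 - x₂ t ^ 2) := mul_pos hden (by linarith)
      have h4 : (2 * C + 1) * (q * ζ₀) ^ 2 = (1 - 2 * C) * ζ₀ ^ 2 := by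
        linear_combination ζ₀ ^ 2 * hqm
      linarith
  · have hneg : x₂ t₁ < 0 := by rw [hx2t]; linarith
    refine ⟨?_, hx2t, hneg⟩
    rw [abs_of_neg hneg, hx1t, hx2t]; ring
  · intro t ht
    have hm := Set.Ioo_subset_Icc_self ht
    have e1 : x₁ t = (C - 1 / 2) * (q * ζ₀) ^ 2 + x₂ t ^ 2 / 2 := by
      rw [hx₁b t hm, hx₂b t hm, hx1t, hx2t]; ring
    have l1 : x₂ t < q ^ 2 * ζ₀ := by rw [hx₂b t hm, hx2t]; linarith [ht.2]
    have l2 : -(q * ζ₀) < x₂ t := by rw [hx₂b t hm, hx2t]; linarith [ht.1]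
    rw [e1]
    rcases le_total 0 (x₂ t) with h | h
    · rw [abs_of_nonneg h]
      have h2 : x₂ t ^ 2 < (q ^ 2 * ζ₀) ^ 2 := by gcongr
      have h3 : 0 < (2 * C + 1) * ((q ^ 2 * ζ₀) ^ 2 - x₂ t ^ 2) := mul_pos hden (by linarith)
      have h4 : (2 * C + 1) * (q ^ 2 * ζ₀) ^ 2 = (1 - 2 * C) * (q * ζ₀) ^ 2 := by
        linear_combination q ^ 2 * ζ₀ ^ 2 * hqm
      linarith
    · rw [abs_of_nonpos h]
      have h2 : x₂ t ^ 2 < (q * ζ₀) ^ 2 := sq_lt_sq' l2 (by linarith)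
      have h3 : 0 < (1 / 2 - C) * ((q * ζ₀) ^ 2 - x₂ t ^ 2) := mul_pos (by linarith) (by linarith)
      linarith
  · have h0 : τ ∈ Set.Icc t₁ τ := ⟨htτ.le, le_rfl⟩
    refine ⟨?_, ?_, by rw [hζ₁]; exact hq2z⟩
    · rw [hx₁b τ h0, hx1t, hx2t, hd, hζ₁]
      linear_combination (q ^ 2 * ζ₀ ^ 2 / 2) * hqm
    · rw [hx₂b τ h0, hx2t, hd, hζ₁]; ring
  · have hq1 : q ^ 2 < 1 := by
      rw [hqs, div_lt_one hden]; linarith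
    rw [tsum_mul_right, tsum_mul_left, tsum_geometric_of_lt_one (sq_nonneg q) hq1]
    have : (1 - q ^ 2)⁻¹ = (2 * C + 1) / (4 * C) := by
      rw [inv_eq_iff_eq_inv, inv_div, hqs]; field_simp; ring
    rw [this]; ring
end
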